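/- arXiv:1401.7698 — 7 statements merged into one kernel-verified Lean document; each statement's English description precedes it below -/
import Mathlib

section
/- Let ρ, ρ† : ℝ × ℝ³ → ℝ and V, B, V†, B† : ℝ × ℝ³ → ℝ³ be smooth functions with ρ(t,x) > 0 for all (t,x), and suppose there is a compact set K ⊆ ℝ³ such that V(t,·), B(t,·), V†(t,·), B†(t,·) all vanish outside K for every t. Assume that for all (t,x): ∂ₜV = −∇ρ† − ρ⁻¹((∇×V)×V†) + ρ⁻¹((∇×B†)×B), ∂ₜB = ∇×(ρ⁻¹ V† × B), and ∇·B = 0. Then the cross helicity t ↦ ∫_{ℝ³} V(t,x)·B(t,x) dx is constant in t. -/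
open MeasureTheory

/-- `i`-th spatial partial derivative of a scalar field on ℝ³. -/
noncomputable def pd3 (i : Fin 3) (f : (Fin 3 → ℝ) → ℝ) (x : Fin 3 → ℝ) : ℝ :=
  fderiv ℝ f x (Pi.single i 1)

/-- Gradient of a scalar field on ℝ³. -/
noncomputable def grad3 (f : (Fin 3 → ℝ) → ℝ) (x : Fin 3 → ℝ) : Fin 3 → ℝ :=
  fun i => pd3 i f x

/-- Divergence of a vector field on ℝ³. -/
noncomputable def div3 (F : (Fin 3 → ℝ) → (Fin 3 → ℝ)) (x : Fin 3 → ℝ) : ℝ :=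
  ∑ i, pd3 i (fun y => F y i) x

/-- Curl of a vector field on ℝ³. -/
noncomputable def curl3 (F : (Fin 3 → ℝ) → (Fin 3 → ℝ)) (x : Fin 3 → ℝ) : Fin 3 → ℝ :=
  ![pd3 1 (fun y => F y 2) x - pd3 2 (fun y => F y 1) x,
    pd3 2 (fun y => F y 0) x - pd3 0 (fun y => F y 2) x,
    pd3 0 (fun y => F y 1) x - pd3 1 (fun y => F y 0) x]

/-- Cross product on ℝ³. -/
def cross3 (a b : Fin 3 → ℝ) : Fin 3 → ℝ :=
  ![a 1 * b 2 - a 2 * b 1, a 2 * b 0 - a 0 * b 2, a 0 * b 1 - a 1 * b 0]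

/-- Euclidean dot product on ℝ³. -/
def dot3 (a b : Fin 3 → ℝ) : ℝ := ∑ i, a i * b i

lemma pd3_mul_aux (i : Fin 3) (f g : (Fin 3 → ℝ) → ℝ) (x : Fin 3 → ℝ)
    (hf : DifferentiableAt ℝ f x) (hg : DifferentiableAt ℝ g x) :
    pd3 i (fun y => f y * g y) x = pd3 i f x * g x + f x * pd3 i g x := by
  unfold pd3
  rw [fderiv_fun_mul hf hg]
  simp
  ring

lemma pd3_add_aux (i : Fin 3) (f g : (Fin 3 → ℝ) → ℝ) (x : Fin 3 → ℝ)
    (hf : DifferentiableAt ℝ f x) (hg : DifferentiableAt ℝ g x) :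
    pd3 i (fun y => f y + g y) x = pd3 i f x + pd3 i g x := by
  unfold pd3
  rw [fderiv_fun_add hf hg]
  simp

lemma pd3_sub_aux (i : Fin 3) (f g : (Fin 3 → ℝ) → ℝ) (x : Fin 3 → ℝ)
    (hf : DifferentiableAt ℝ f x) (hg : DifferentiableAt ℝ g x) :
    pd3 i (fun y => f y - g y) x = pd3 i f x - pd3 i g x := by
  unfold pd3
  rw [fderiv_fun_sub hf hg]
  simp

lemma pd3_comb_aux (i : Fin 3) (a b c d p q : (Fin 3 → ℝ) → ℝ) (x : Fin 3 → ℝ)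
    (ha : DifferentiableAt ℝ a x) (hb : DifferentiableAt ℝ b x)
    (hc : DifferentiableAt ℝ c x) (hd : DifferentiableAt ℝ d x)
    (hp : DifferentiableAt ℝ p x) (hq : DifferentiableAt ℝ q x) :
    pd3 i (fun y => (a y * b y - c y * d y) - p y * q y) x =
      (pd3 i a x * b x + a x * pd3 i b x) - (pd3 i c x * d x + c x * pd3 i d x)
       - (pd3 i p x * q x + p x * pd3 i q x) := by
  rw [pd3_sub_aux i _ _ x (by fun_prop) (by fun_prop), pd3_sub_aux i _ _ x (by fun_prop) (by fun_prop),
    pd3_mul_aux i _ _ x ha hb, pd3_mul_aux i _ _ x hc hd, pd3_mul_aux i _ _ x hp hq]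

lemma div3_aux (r : (Fin 3 → ℝ) → ℝ) (b e v : (Fin 3 → ℝ) → (Fin 3 → ℝ)) (x : Fin 3 → ℝ)
    (hr : DifferentiableAt ℝ r x) (hb : ∀ i, DifferentiableAt ℝ (fun y => b y i) x)
    (he : ∀ i, DifferentiableAt ℝ (fun y => e y i) x)
    (hv : ∀ i, DifferentiableAt ℝ (fun y => v y i) x) :
    div3 (fun y i => cross3 (e y) (v y) i - r y * b y i) x =
      dot3 (curl3 e x) (v x) - dot3 (e x) (curl3 v x)
        - dot3 (grad3 r x) (b x) - r x * div3 b x := by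
  have h0 := pd3_comb_aux 0 _ _ _ _ _ _ x (he 1) (hv 2) (he 2) (hv 1) hr (hb 0)
  have h1 := pd3_comb_aux 1 _ _ _ _ _ _ x (he 2) (hv 0) (he 0) (hv 2) hr (hb 1)
  have h2 := pd3_comb_aux 2 _ _ _ _ _ _ x (he 0) (hv 1) (he 1) (hv 0) hr (hb 2)
  simp only [div3, Fin.sum_univ_three, dot3, curl3, grad3, cross3, Matrix.cons_val_zero,
    Matrix.cons_val_one, Matrix.cons_val] at *
  rw [h0, h1, h2]
  ring

lemma integral_pd3_aux (i : Fin 3) (f : (Fin 3 → ℝ) → ℝ) (hf : ContDiff ℝ 1 f)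
    (hc : HasCompactSupport f) :
    Integrable (pd3 i f) ∧ ∫ x, pd3 i f x = 0 := by
  have hcont : Continuous (pd3 i f) :=
    (hf.continuous_fderiv (by norm_num)).clm_apply continuous_const
  have hint : Integrable (pd3 i f) :=
    hcont.integrable_of_hasCompactSupport (hc.fderiv_apply ℝ _)
  refine ⟨hint, ?_⟩
  have hint' : Integrable (fun x => fderiv ℝ f x (Pi.single i 1)) := hint
  have := integral_mul_fderiv_eq_neg_fderiv_mul_of_integrable (𝕜 := ℝ) (μ := (volume : Measure (Fin 3 → ℝ)))
    (f := fun _ => (1:ℝ)) (g := f) (v := Pi.single i 1) (by simp) (by simpa [pd3] using hint')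
    (by simpa using hf.continuous.integrable_of_hasCompactSupport hc)
    (fun x _ => by fun_prop) (fun x _ => hf.differentiable (by norm_num) x)
  simpa [pd3] using this

lemma integral_div3_aux (F : (Fin 3 → ℝ) → (Fin 3 → ℝ)) (hF : ∀ i, ContDiff ℝ 1 (fun y => F y i))
    (hc : ∀ i, HasCompactSupport (fun y => F y i)) : ∫ x, div3 F x = 0 := by
  unfold div3
  rw [integral_finsetSum _ fun i _ => (integral_pd3_aux i _ (hF i) (hc i)).1]
  exact Finset.sum_eq_zero fun i _ => (integral_pd3_aux i _ (hF i) (hc i)).2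

lemma hasDerivAt_integral_aux (G : ℝ × (Fin 3 → ℝ) → ℝ) (hG : ContDiff ℝ 1 G)
    (K : Set (Fin 3 → ℝ)) (hK : IsCompact K) (h0 : ∀ t x, x ∉ K → G (t, x) = 0)
    (D : ℝ → (Fin 3 → ℝ) → ℝ) (hD : ∀ t x, HasDerivAt (fun τ => G (τ, x)) (D t x) t) (t : ℝ) :
    HasDerivAt (fun τ => ∫ x, G (τ, x)) (∫ x, D t x) t := by
  have hDe : ∀ t x, D t x = fderiv ℝ G (t, x) (1, 0) := by
    intro t x
    have h1 : HasFDerivAt G (fderiv ℝ G (t, x)) (t, x) :=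
      (hG.differentiable (by norm_num) _).hasFDerivAt
    have h2 : HasDerivAt (fun τ : ℝ => (τ, x)) ((1 : ℝ), (0 : Fin 3 → ℝ)) t :=
      (hasDerivAt_id t).prodMk (hasDerivAt_const t x)
    exact (hD t x).unique (h1.comp_hasDerivAt t h2)
  have hDc : Continuous (fun p : ℝ × (Fin 3 → ℝ) => D p.1 p.2) := by
    simp only [hDe]
    exact (hG.continuous_fderiv (by norm_num)).clm_apply continuous_const
  have hD0 : ∀ t x, x ∉ K → D t x = 0 := by
    intro t x hx
    have h := hD t x
    simp only [h0 _ x hx] at h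
    exact h.unique (hasDerivAt_const t 0)
  obtain ⟨C, hC⟩ := ((isCompact_closedBall t 1).prod hK).exists_bound_of_continuousOn hDc.continuousOn
  refine (hasDerivAt_integral_of_dominated_loc_of_deriv_le (bound := K.indicator fun _ => C)
    (F := fun τ x => G (τ, x)) (F' := D)
    (Metric.closedBall_mem_nhds t one_pos) ?_ ?_ ?_ ?_ ?_ ?_).2
  · exact .of_forall fun τ => (hG.continuous.comp (by fun_prop)).aestronglyMeasurable
  · exact (hG.continuous.comp (by fun_prop)).integrable_of_hasCompactSupport
      (HasCompactSupport.intro hK fun x hx => h0 t x hx)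
  · exact (hDc.comp (by fun_prop : Continuous fun x => (t, x))).aestronglyMeasurable
  · refine .of_forall fun x τ hτ => ?_
    by_cases hx : x ∈ K
    · simpa [hx] using hC (τ, x) ⟨hτ, hx⟩
    · simp [hx, hD0 τ x hx]
  · exact (integrable_indicator_iff hK.measurableSet).2 (integrableOn_const hK.measure_lt_top.ne)
  · exact .of_forall fun x τ _ => hD τ x

/-- For the extended-MHD Hamiltonian flow with arbitrary functional gradients
`ρ† = ∂_ρ H`, `V† = ∂_V H`, `B† = ∂_B H` (any Hamiltonian independent of the mock field),
the cross helicity `∫ V·B` is a constant of motion. -/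
theorem cross_helicity_constant_general_hamiltonian
    (ρ ρd : ℝ → (Fin 3 → ℝ) → ℝ)
    (V B Vd Bd : ℝ → (Fin 3 → ℝ) → (Fin 3 → ℝ))
    (hρ : ContDiff ℝ (⊤ : ℕ∞) (fun p : ℝ × (Fin 3 → ℝ) => ρ p.1 p.2))
    (hρd : ContDiff ℝ (⊤ : ℕ∞) (fun p : ℝ × (Fin 3 → ℝ) => ρd p.1 p.2))
    (hV : ContDiff ℝ (⊤ : ℕ∞) (fun p : ℝ × (Fin 3 → ℝ) => V p.1 p.2))
    (hB : ContDiff ℝ (⊤ : ℕ∞) (fun p : ℝ × (Fin 3 → ℝ) => B p.1 p.2))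
    (hVd : ContDiff ℝ (⊤ : ℕ∞) (fun p : ℝ × (Fin 3 → ℝ) => Vd p.1 p.2))
    (hBd : ContDiff ℝ (⊤ : ℕ∞) (fun p : ℝ × (Fin 3 → ℝ) => Bd p.1 p.2))
    (hρpos : ∀ t x, 0 < ρ t x)
    (K : Set (Fin 3 → ℝ)) (hK : IsCompact K)
    (hVsupp : ∀ t x, x ∉ K → V t x = 0)
    (hBsupp : ∀ t x, x ∉ K → B t x = 0)
    (hVdsupp : ∀ t x, x ∉ K → Vd t x = 0)
    (hBdsupp : ∀ t x, x ∉ K → Bd t x = 0)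
    (hmom : ∀ t x, deriv (fun τ => V τ x) t =
      -grad3 (ρd t) x - (ρ t x)⁻¹ • cross3 (curl3 (V t) x) (Vd t x)
        + (ρ t x)⁻¹ • cross3 (curl3 (Bd t) x) (B t x))
    (hind : ∀ t x, deriv (fun τ => B τ x) t =
      curl3 (fun y => cross3 ((ρ t y)⁻¹ • Vd t y) (B t y)) x)
    (hdivB : ∀ t x, div3 (B t) x = 0) :
    ∀ t₁ t₂ : ℝ,
      (∫ x : Fin 3 → ℝ, dot3 (V t₁ x) (B t₁ x)) =
        ∫ x : Fin 3 → ℝ, dot3 (V t₂ x) (B t₂ x) := by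
  have hVi : ∀ i, ContDiff ℝ 1 (fun p : ℝ × (Fin 3 → ℝ) => V p.1 p.2 i) := fun i =>
    (contDiff_pi.1 hV i).of_le (by exact_mod_cast le_top)
  have hBi : ∀ i, ContDiff ℝ 1 (fun p : ℝ × (Fin 3 → ℝ) => B p.1 p.2 i) := fun i =>
    (contDiff_pi.1 hB i).of_le (by exact_mod_cast le_top)
  have hVdi : ∀ i, ContDiff ℝ 1 (fun p : ℝ × (Fin 3 → ℝ) => Vd p.1 p.2 i) := fun i =>
    (contDiff_pi.1 hVd i).of_le (by exact_mod_cast le_top)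
  have hr : ContDiff ℝ 1 (fun p : ℝ × (Fin 3 → ℝ) => ρ p.1 p.2) :=
    hρ.of_le (by exact_mod_cast le_top)
  have hrd : ContDiff ℝ 1 (fun p : ℝ × (Fin 3 → ℝ) => ρd p.1 p.2) :=
    hρd.of_le (by exact_mod_cast le_top)
  have sl : ∀ t : ℝ, ContDiff ℝ 1 (fun x : Fin 3 → ℝ => (t, x)) := fun t => by fun_prop
  have hVt : ∀ t i, ContDiff ℝ 1 (fun x => V t x i) := fun t i => (hVi i).comp (sl t)
  have hBt : ∀ t i, ContDiff ℝ 1 (fun x => B t x i) := fun t i => (hBi i).comp (sl t)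
  have hVdt : ∀ t i, ContDiff ℝ 1 (fun x => Vd t x i) := fun t i => (hVdi i).comp (sl t)
  have hrt : ∀ t, ContDiff ℝ 1 (fun x => (ρ t x)⁻¹) := fun t =>
    (hr.comp (sl t)).inv fun x => (hρpos t x).ne'
  have hrdt : ∀ t, ContDiff ℝ 1 (ρd t) := fun t => hrd.comp (sl t)
  have hE : ∀ t i, ContDiff ℝ 1 (fun y => cross3 ((ρ t y)⁻¹ • Vd t y) (B t y) i) := by
    intro t i
    have h1 := hrt t
    have h2 := hVdt t
    have h3 := hBt t
    fin_cases i <;> simp [cross3] <;> fun_prop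
  have hW : ∀ t i, ContDiff ℝ 1 (fun y =>
      cross3 (cross3 ((ρ t y)⁻¹ • Vd t y) (B t y)) (V t y) i - ρd t y * B t y i) := by
    intro t i
    have h1 := hE t
    have h2 := hVt t
    have h3 := hBt t
    have h4 := hrdt t
    refine ContDiff.sub ?_ (h4.mul (h3 i))
    generalize (fun y => cross3 ((ρ t y)⁻¹ • Vd t y) (B t y)) = e at *
    fin_cases i
    · exact ((h1 1).mul (h2 2)).sub ((h1 2).mul (h2 1))
    · exact ((h1 2).mul (h2 0)).sub ((h1 0).mul (h2 2))
    · exact ((h1 0).mul (h2 1)).sub ((h1 1).mul (h2 0))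
  have key : ∀ t, HasDerivAt (fun τ => ∫ x, dot3 (V τ x) (B τ x)) 0 t := by
    intro t
    have hD := hasDerivAt_integral_aux (fun p => dot3 (V p.1 p.2) (B p.1 p.2))
      (by unfold dot3; exact ContDiff.sum fun i _ => (hVi i).mul (hBi i)) K hK
      (fun t x hx => by simp [dot3, hVsupp t x hx])
      (fun t x => div3 (fun y i =>
        cross3 (cross3 ((ρ t y)⁻¹ • Vd t y) (B t y)) (V t y) i - ρd t y * B t y i) x) ?_ t
    · rw [integral_div3_aux _ (hW t) fun i => HasCompactSupport.intro hK fun x hx => by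
        fin_cases i <;> simp [cross3, hBsupp t x hx]] at hD
      · exact hD
    · intro t x
      have d : ∀ {f : (Fin 3 → ℝ) → ℝ}, ContDiff ℝ 1 f → DifferentiableAt ℝ f x := fun h =>
        h.differentiable (by norm_num) x
      rw [div3_aux (ρd t) (B t) _ (V t) x (d (hrdt t)) (fun i => d (hBt t i))
        (fun i => d (hE t i)) (fun i => d (hVt t i)), hdivB, ← hind]
      have st : ContDiff ℝ 1 (fun τ : ℝ => (τ, x)) := by fun_prop
      have hVx : HasDerivAt (fun τ => V τ x) (deriv (fun τ => V τ x) t) t :=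
        (((hV.of_le (by exact_mod_cast le_top)).comp st).differentiable
          (by norm_num) t).hasDerivAt
      have hBx : HasDerivAt (fun τ => B τ x) (deriv (fun τ => B τ x) t) t :=
        (((hB.of_le (by exact_mod_cast le_top)).comp st).differentiable
          (by norm_num) t).hasDerivAt
      rw [hmom] at hVx
      generalize deriv (fun τ => B τ x) t = B' at *
      have hs := HasDerivAt.fun_sum (u := Finset.univ) fun i _ =>
        (hasDerivAt_pi.1 hVx i).mul (hasDerivAt_pi.1 hBx i)
      refine hs.congr_deriv ?_
      simp only [Fin.sum_univ_three, dot3, cross3, Pi.add_apply, Pi.sub_apply, Pi.neg_apply,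
        Pi.smul_apply, smul_eq_mul, Matrix.cons_val_zero, Matrix.cons_val_one, Matrix.cons_val]
      ring
  intro t₁ t₂
  exact is_const_of_deriv_eq_zero (fun t => (key t).differentiableAt) (fun t => (key t).deriv) t₁ t₂
end

section
/- Let A, V : ℝ × ℝ³ → ℝ³ and φ : ℝ × ℝ³ → ℝ be smooth, and suppose there is a compact set K ⊆ ℝ³ such that A(t,·) vanishes outside K for every t. Assume ∂ₜA = V×(∇×A) − ∇φ for all (t,x). Then the magnetic helicity t ↦ ∫_{ℝ³} A(t,x)·(∇×A)(t,x) dx is constant in t. -/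
open MeasureTheory

abbrev X3 := Fin 3 → ℝ

/-- jointly smooth -/
def Sm (f : ℝ → X3 → ℝ) : Prop := ContDiff ℝ (⊤ : ℕ∞) (fun p : ℝ × X3 => f p.1 p.2)

/-- time derivative -/
noncomputable def Dt (f : ℝ → X3 → ℝ) (t : ℝ) (x : X3) : ℝ := deriv (fun τ => f τ x) t

theorem Sm.pd_eq {f : ℝ → X3 → ℝ} (hf : Sm f) (i : Fin 3) (t : ℝ) (x : X3) :
    pd3 i (f t) x = fderiv ℝ (fun p : ℝ × X3 => f p.1 p.2) (t, x) (0, Pi.single i 1) := by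
  have h1 : HasFDerivAt (fun p : ℝ × X3 => f p.1 p.2) _ (t, x) :=
    (hf.differentiable (by simp) (t, x)).hasFDerivAt
  have h2 : HasFDerivAt (fun y : X3 => (t, y)) (ContinuousLinearMap.inr ℝ ℝ X3) x :=
    hasFDerivAt_prodMk_right t x
  have h3 := (h1.comp x h2).fderiv
  unfold pd3
  change fderiv ℝ ((fun p : ℝ × X3 => f p.1 p.2) ∘ fun y : X3 => (t, y)) x _ = _
  rw [h3]; simp

theorem Sm.hasDt' {f : ℝ → X3 → ℝ} (hf : Sm f) (t : ℝ) (x : X3) :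
    HasDerivAt (fun τ => f τ x) (fderiv ℝ (fun p : ℝ × X3 => f p.1 p.2) (t, x) (1, 0)) t := by
  have h1 : HasFDerivAt (fun p : ℝ × X3 => f p.1 p.2) _ (t, x) :=
    (hf.differentiable (by simp) (t, x)).hasFDerivAt
  have h2 : HasFDerivAt (fun τ : ℝ => (τ, x)) (ContinuousLinearMap.inl ℝ ℝ X3) t :=
    hasFDerivAt_prodMk_left t x
  have h3 := (h1.comp t h2).hasDerivAt
  simpa using! h3

theorem Sm.Dt_eq {f : ℝ → X3 → ℝ} (hf : Sm f) (t : ℝ) (x : X3) :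
    Dt f t x = fderiv ℝ (fun p : ℝ × X3 => f p.1 p.2) (t, x) (1, 0) := (hf.hasDt' t x).deriv

theorem Sm.hasDt {f : ℝ → X3 → ℝ} (hf : Sm f) (t : ℝ) (x : X3) :
    HasDerivAt (fun τ => f τ x) (Dt f t x) t := by
  rw [hf.Dt_eq]; exact hf.hasDt' t x

theorem Sm.dir {f : ℝ → X3 → ℝ} (hf : Sm f) (v : ℝ × X3) :
    ContDiff ℝ (⊤ : ℕ∞) (fun p => fderiv ℝ (fun p : ℝ × X3 => f p.1 p.2) p v) := by
  have := hf.fderiv_right (m := (⊤ : ℕ∞)) (by simp)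
  exact this.clm_apply contDiff_const

theorem Sm.pd {f : ℝ → X3 → ℝ} (hf : Sm f) (i : Fin 3) : Sm (fun t x => pd3 i (f t) x) := by
  unfold Sm
  simp_rw [hf.pd_eq]
  exact hf.dir _

theorem Sm.Dt {f : ℝ → X3 → ℝ} (hf : Sm f) : Sm (Dt f) := by
  unfold Sm
  simp_rw [hf.Dt_eq]
  exact hf.dir _

theorem Sm.slice {f : ℝ → X3 → ℝ} (hf : Sm f) (t : ℝ) : ContDiff ℝ (⊤ : ℕ∞) (f t) :=
  ContDiff.comp (g := fun p : ℝ × X3 => f p.1 p.2) hf (contDiff_const.prodMk contDiff_id)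

theorem Sm.diff {f : ℝ → X3 → ℝ} (hf : Sm f) (t : ℝ) (x : X3) : DifferentiableAt ℝ (f t) x :=
  (hf.slice t).differentiable (by simp) x

theorem Sm.mul {f g : ℝ → X3 → ℝ} (hf : Sm f) (hg : Sm g) : Sm (fun t x => f t x * g t x) :=
  ContDiff.mul hf hg
theorem Sm.add {f g : ℝ → X3 → ℝ} (hf : Sm f) (hg : Sm g) : Sm (fun t x => f t x + g t x) :=
  ContDiff.add hf hg
theorem Sm.sub {f g : ℝ → X3 → ℝ} (hf : Sm f) (hg : Sm g) : Sm (fun t x => f t x - g t x) :=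
  ContDiff.sub hf hg

theorem Sm.second {f : ℝ → X3 → ℝ} (hf : Sm f) (v w : ℝ × X3) (p : ℝ × X3) :
    fderiv ℝ (fun q => fderiv ℝ (fun p : ℝ × X3 => f p.1 p.2) q v) p w =
    fderiv ℝ (fun q => fderiv ℝ (fun p : ℝ × X3 => f p.1 p.2) q w) p v := by
  have hs : IsSymmSndFDerivAt ℝ (fun p : ℝ × X3 => f p.1 p.2) p :=
    (ContDiff.contDiffAt hf).isSymmSndFDerivAt (by simp; exact WithTop.coe_le_coe.2 le_top)
  have hd : DifferentiableAt ℝ (fderiv ℝ (fun p : ℝ × X3 => f p.1 p.2)) p :=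
    (hf.fderiv_right (m := (⊤ : ℕ∞)) (by simp)).differentiable (by simp) p
  rw [fderiv_clm_apply hd (by fun_prop), fderiv_clm_apply hd (by fun_prop)]
  simpa using hs w v

theorem Sm.pd_comm {f : ℝ → X3 → ℝ} (hf : Sm f) (i j : Fin 3) (t : ℝ) (x : X3) :
    pd3 i (fun y => pd3 j (f t) y) x = pd3 j (fun y => pd3 i (f t) y) x := by
  rw [(hf.pd j).pd_eq i t x, (hf.pd i).pd_eq j t x]
  simp_rw [hf.pd_eq]
  exact hf.second _ _ _

theorem Sm.Dt_pd {f : ℝ → X3 → ℝ} (hf : Sm f) (i : Fin 3) (t : ℝ) (x : X3) :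
    _root_.Dt (fun t x => pd3 i (f t) x) t x = pd3 i (fun y => _root_.Dt f t y) x := by
  rw [(hf.pd i).Dt_eq t x, hf.Dt.pd_eq i t x]
  simp_rw [hf.pd_eq, hf.Dt_eq]
  exact hf.second _ _ _

theorem pd3_mul {f g : X3 → ℝ} {x : X3} (hf : DifferentiableAt ℝ f x)
    (hg : DifferentiableAt ℝ g x) (i : Fin 3) :
    pd3 i (fun y => f y * g y) x = f x * pd3 i g x + g x * pd3 i f x := by
  unfold pd3; rw [fderiv_fun_mul hf hg]; simp

theorem pd3_sub {f g : X3 → ℝ} {x : X3} (hf : DifferentiableAt ℝ f x)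
    (hg : DifferentiableAt ℝ g x) (i : Fin 3) :
    pd3 i (fun y => f y - g y) x = pd3 i f x - pd3 i g x := by
  unfold pd3; rw [fderiv_fun_sub hf hg]; simp

theorem pd3_supp {f : X3 → ℝ} {K : Set X3} (hK : IsCompact K) (hf : ∀ x ∉ K, f x = 0)
    (i : Fin 3) : ∀ x ∉ K, pd3 i f x = 0 := by
  intro x hx
  have : f =ᶠ[nhds x] fun _ => 0 := by
    filter_upwards [hK.isClosed.isOpen_compl.mem_nhds hx] with y hy using hf y hy
  unfold pd3; rw [this.fderiv_eq]; simp

theorem integ {f : X3 → ℝ} {K : Set X3} (hK : IsCompact K) (hf : ∀ x ∉ K, f x = 0)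
    (hc : Continuous f) : Integrable f :=
  hc.integrable_of_hasCompactSupport (HasCompactSupport.intro hK hf)

theorem int_pd3 {f : X3 → ℝ} {K : Set X3} (hK : IsCompact K) (hf : ∀ x ∉ K, f x = 0)
    (hc : ContDiff ℝ (⊤ : ℕ∞) f) (i : Fin 3) :
    Integrable (pd3 i f) ∧ ∫ x, pd3 i f x = 0 := by
  have hi : Integrable (pd3 i f) := integ hK (pd3_supp hK hf i)
    ((hc.continuous_fderiv (by simp)).clm_apply continuous_const)
  refine ⟨hi, ?_⟩
  have := integral_mul_fderiv_eq_neg_fderiv_mul_of_integrable (𝕜 := ℝ) (μ := (volume : Measure X3))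
    (f := fun _ : X3 => (1 : ℝ)) (g := f) (v := Pi.single i 1) (by simp)
    (by simpa using! hi) (by simpa using integ hK hf hc.continuous)
    (fun x _ => by fun_prop) (fun x _ => hc.differentiable (by simp) x)
  simpa using! this

theorem deriv_int {F : ℝ → X3 → ℝ} (hF : Sm F) {K : Set X3} (hK : IsCompact K)
    (hs : ∀ t, ∀ x ∉ K, F t x = 0) (t : ℝ) :
    HasDerivAt (fun t => ∫ x, F t x) (∫ x, Dt F t x) t := by
  obtain ⟨C, hC⟩ := ((isCompact_Icc (a := t - 1) (b := t + 1)).prod hK).exists_bound_of_continuousOn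
    (f := fun p : ℝ × X3 => Dt F p.1 p.2) (ContDiff.continuous hF.Dt).continuousOn
  refine (hasDerivAt_integral_of_dominated_loc_of_deriv_le (F' := Dt F) (s := Set.Icc (t-1) (t+1))
    (bound := K.indicator fun _ => C)
    (Icc_mem_nhds (by linarith) (by linarith)) ?_ ?_ ?_ ?_ ?_ ?_).2
  · exact Filter.Eventually.of_forall fun s => (hF.slice s).continuous.aestronglyMeasurable
  · exact integ hK (hs t) (hF.slice t).continuous
  · exact (hF.Dt.slice t).continuous.aestronglyMeasurable
  · refine Filter.Eventually.of_forall fun x s hsI => ?_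
    by_cases hx : x ∈ K
    · rw [Set.indicator_of_mem hx]; exact hC (s, x) ⟨hsI, hx⟩
    · rw [Set.indicator_of_notMem hx]
      simp [Dt, hs _ x hx]
  · rw [integrable_indicator_iff hK.measurableSet]
    exact integrableOn_const hK.measure_lt_top.ne
  · exact Filter.Eventually.of_forall fun x s _ => hF.hasDt s x

/-- Conservation of the magnetic helicity `∫ A·(∇×A)` under the uncurled
ideal induction equation `∂ₜA = V×(∇×A) − ∇φ`. -/
theorem magnetic_helicity_constant
    (A V : ℝ → (Fin 3 → ℝ) → (Fin 3 → ℝ))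
    (φ : ℝ → (Fin 3 → ℝ) → ℝ)
    (hA : ContDiff ℝ (⊤ : ℕ∞) (fun p : ℝ × (Fin 3 → ℝ) => A p.1 p.2))
    (hV : ContDiff ℝ (⊤ : ℕ∞) (fun p : ℝ × (Fin 3 → ℝ) => V p.1 p.2))
    (hφ : ContDiff ℝ (⊤ : ℕ∞) (fun p : ℝ × (Fin 3 → ℝ) => φ p.1 p.2))
    (K : Set (Fin 3 → ℝ)) (hK : IsCompact K)
    (hAsupp : ∀ t x, x ∉ K → A t x = 0)
    (hind : ∀ t x, deriv (fun τ => A τ x) t =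
      cross3 (V t x) (curl3 (A t) x) - grad3 (φ t) x) :
    ∀ t₁ t₂ : ℝ,
      (∫ x : Fin 3 → ℝ, dot3 (A t₁ x) (curl3 (A t₁) x)) =
        ∫ x : Fin 3 → ℝ, dot3 (A t₂ x) (curl3 (A t₂) x) := by
  have ha : ∀ i, Sm (fun t x => A t x i) := fun i => contDiff_pi.1 hA i
  have hp : Sm φ := hφ
  have hs : ∀ i t, ∀ x ∉ K, A t x i = 0 := fun i t x hx => by rw [hAsupp t x hx]; rfl
  obtain ⟨a, hadef⟩ : ∃ a : Fin 3 → ℝ → X3 → ℝ, a = fun i t x => A t x i := ⟨_, rfl⟩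
  have ha : ∀ i, Sm (a i) := by rw [hadef]; exact ha
  have hs : ∀ i t, ∀ x ∉ K, a i t x = 0 := by rw [hadef]; exact hs
  have hind' : ∀ i t x, Dt (a i) t x = (cross3 (V t x) (curl3 (A t) x) - grad3 (φ t) x) i := by
    intro i t x
    rw [← hind t x]
    have hd : DifferentiableAt ℝ (fun τ => A τ x) t :=
      differentiableAt_pi.2 fun j => by
        have := ((ha j).hasDt t x).differentiableAt
        simpa [hadef] using this
    rw [deriv_pi (fun j => differentiableAt_pi.1 hd j)]
    simp [Dt, hadef]
  have hFeq : ∀ t x, dot3 (A t x) (curl3 (A t) x) =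
      a 0 t x * (pd3 1 (a 2 t) x - pd3 2 (a 1 t) x) +
      a 1 t x * (pd3 2 (a 0 t) x - pd3 0 (a 2 t) x) +
      a 2 t x * (pd3 0 (a 1 t) x - pd3 1 (a 0 t) x) := by
    intro t x
    simp [dot3, curl3, Fin.sum_univ_three, hadef]
  simp_rw [hFeq]
  let b : Fin 3 → Fin 3 → ℝ → X3 → ℝ := fun i j t x => pd3 i (a j t) x - pd3 j (a i t) x
  have hb : ∀ i j, Sm (b i j) := fun i j => ((ha j).pd i).sub ((ha i).pd j)
  have hbs : ∀ i j t, ∀ x ∉ K, b i j t x = 0 := fun i j t x hx => by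
    simp [b, pd3_supp hK (hs _ t) _ x hx]
  have hDs : ∀ i t, ∀ x ∉ K, Dt (a i) t x = 0 := fun i t x hx => by
    simp [Dt, hs _ _ x hx]
  have hF : Sm (fun t x => a 0 t x * b 1 2 t x + a 1 t x * b 2 0 t x + a 2 t x * b 0 1 t x) :=
    (((ha 0).mul (hb 1 2)).add ((ha 1).mul (hb 2 0))).add ((ha 2).mul (hb 0 1))
  let h : Fin 3 → Fin 3 → Fin 3 → ℝ → X3 → ℝ := fun _ j k t x =>
    (Dt (a j) t x * a k t x - Dt (a k) t x * a j t x) - (φ t x + φ t x) * b j k t x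
  have hh : ∀ i j k, Sm (h i j k) := fun i j k =>
    (((ha j).Dt.mul (ha k)).sub ((ha k).Dt.mul (ha j))).sub ((hp.add hp).mul (hb j k))
  have hhs : ∀ i j k t, ∀ x ∉ K, h i j k t x = 0 := fun i j k t x hx => by
    simp [h, hs _ t x hx, hbs _ _ t x hx]
  have hDb : ∀ i j t x, HasDerivAt (fun τ => b i j τ x)
      (pd3 i (fun y => Dt (a j) t y) x - pd3 j (fun y => Dt (a i) t y) x) t := by
    intro i j t x
    rw [← (ha j).Dt_pd, ← (ha i).Dt_pd]
    exact (((ha j).pd i).hasDt t x).sub (((ha i).pd j).hasDt t x)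
  have hpdh : ∀ i j k t x, pd3 i (h i j k t) x =
      (Dt (a j) t x * pd3 i (a k t) x + a k t x * pd3 i (fun y => Dt (a j) t y) x)
      - (Dt (a k) t x * pd3 i (a j t) x + a j t x * pd3 i (fun y => Dt (a k) t y) x)
      - ((φ t x + φ t x) * (pd3 i (fun y => pd3 j (a k t) y) x - pd3 i (fun y => pd3 k (a j t) y) x)
        + b j k t x * (pd3 i (φ t) x + pd3 i (φ t) x)) := by
    intro i j k t x
    have e1 : pd3 i (fun y => φ t y + φ t y) x = pd3 i (φ t) x + pd3 i (φ t) x := by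
      unfold pd3; rw [fderiv_fun_add (hp.diff t x) (hp.diff t x)]; simp
    have e2 : pd3 i (b j k t) x =
        pd3 i (fun y => pd3 j (a k t) y) x - pd3 i (fun y => pd3 k (a j t) y) x :=
      pd3_sub (((ha k).pd j).diff t x) (((ha j).pd k).diff t x) i
    rw [← e1, ← e2]
    have := pd3_sub ((((ha j).Dt.mul (ha k)).sub ((ha k).Dt.mul (ha j))).diff t x)
      (((hp.add hp).mul (hb j k)).diff t x) i
    refine this.trans ?_
    rw [pd3_sub (((ha j).Dt.mul (ha k)).diff t x) (((ha k).Dt.mul (ha j)).diff t x),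
      pd3_mul ((ha j).Dt.diff t x) ((ha k).diff t x), pd3_mul ((ha k).Dt.diff t x) ((ha j).diff t x),
      pd3_mul ((hp.add hp).diff t x) ((hb j k).diff t x)]
  have key : ∀ t x, Dt (fun t x => a 0 t x * b 1 2 t x + a 1 t x * b 2 0 t x + a 2 t x * b 0 1 t x)
      t x = pd3 0 (h 0 1 2 t) x + pd3 1 (h 1 2 0 t) x + pd3 2 (h 2 0 1 t) x := by
    intro t x
    have h1 := (((((ha 0).hasDt t x).mul (hDb 1 2 t x)).add
      (((ha 1).hasDt t x).mul (hDb 2 0 t x))).add (((ha 2).hasDt t x).mul (hDb 0 1 t x))).deriv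
    refine Eq.trans h1 ?_
    rw [hpdh, hpdh, hpdh, (ha 2).pd_comm 1 0, (ha 1).pd_comm 2 0, (ha 0).pd_comm 2 1]
    have i0 := hind' 0 t x
    have i1 := hind' 1 t x
    have i2 := hind' 2 t x
    have c0 : curl3 (A t) x 0 = b 1 2 t x := by simp [curl3, b, hadef]
    have c1 : curl3 (A t) x 1 = b 2 0 t x := by simp [curl3, b, hadef]
    have c2 : curl3 (A t) x 2 = b 0 1 t x := by simp [curl3, b, hadef]
    simp only [Pi.sub_apply, cross3, grad3, c0, c1, c2, Matrix.cons_val_zero, Matrix.cons_val_one,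
      Matrix.cons_val] at i0 i1 i2
    have orth : Dt (a 0) t x * b 1 2 t x + Dt (a 1) t x * b 2 0 t x + Dt (a 2) t x * b 0 1 t x =
      - (pd3 0 (φ t) x * b 1 2 t x + pd3 1 (φ t) x * b 2 0 t x + pd3 2 (φ t) x * b 0 1 t x) := by
      rw [i0, i1, i2]; ring
    simp only [b] at orth ⊢
    linear_combination 2 * orth
  have hder : ∀ t, HasDerivAt (fun t => ∫ x, (a 0 t x * b 1 2 t x + a 1 t x * b 2 0 t x
      + a 2 t x * b 0 1 t x)) 0 t := by
    intro t
    have h1 := deriv_int hF hK (fun t x hx => by simp [hs _ t x hx]) t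
    simp_rw [key] at h1
    have I0 := int_pd3 hK (hhs 0 1 2 t) ((hh 0 1 2).slice t) 0
    have I1 := int_pd3 hK (hhs 1 2 0 t) ((hh 1 2 0).slice t) 1
    have I2 := int_pd3 hK (hhs 2 0 1 t) ((hh 2 0 1).slice t) 2
    have hz : ∫ x, (pd3 0 (h 0 1 2 t) x + pd3 1 (h 1 2 0 t) x + pd3 2 (h 2 0 1 t) x) = 0 := by
      refine (integral_add (I0.1.add I1.1) I2.1).trans ?_
      rw [I2.2, add_zero]
      refine (integral_add I0.1 I1.1).trans ?_
      rw [I0.2, I1.2, add_zero]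
    rwa [hz] at h1
  intro t₁ t₂
  exact is_const_of_deriv_eq_zero (fun t => (hder t).differentiableAt) (fun t => (hder t).deriv) t₁ t₂
end

section
/- Let V : ℝ × ℝ³ → ℝ³ be smooth and let x : ℝ × ℝ → ℝ³ be a smooth map satisfying ∂ₜx(t,s) = V(t, x(t,s)) and x(t, s+1) = x(t,s) for all (t,s) (an advected closed loop). Let A : ℝ × ℝ³ → ℝ³ be smooth and define the circulation Φ(t) = ∫₀¹ A(t, x(t,s)) · ∂ₛx(t,s) ds. Then Φ is differentiable and Φ′(t) = ∫₀¹ (∂ₜA − V×(∇×A))(t, x(t,s)) · ∂ₛx(t,s) ds. -/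
open MeasureTheory

theorem aux_param (F : ℝ × ℝ → ℝ) (hF : ContDiff ℝ 1 F) (t : ℝ) :
    HasDerivAt (fun τ => ∫ s in (0:ℝ)..1, F (τ, s))
      (∫ s in (0:ℝ)..1, fderiv ℝ F (t, s) (1, 0)) t := by
  have hc : Continuous (fun p : ℝ × ℝ => fderiv ℝ F p (1, 0)) :=
    (hF.continuous_fderiv one_ne_zero).clm_apply continuous_const
  obtain ⟨C, hC⟩ := ((isCompact_Icc (a := t - 1) (b := t + 1)).prod
    (isCompact_Icc (a := (0:ℝ)) (b := 1))).exists_bound_of_continuousOn hc.continuousOn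
  have hFc := hF.continuous
  refine (intervalIntegral.hasDerivAt_integral_of_dominated_loc_of_deriv_le
    (F := fun τ s => F (τ, s)) (F' := fun τ s => fderiv ℝ F (τ, s) (1, 0))
    (bound := fun _ => C)
    (s := Set.Icc (t - 1) (t + 1)) (Icc_mem_nhds (by linarith) (by linarith)) ?_ ?_ ?_ ?_ ?_ ?_).2
  · refine Filter.Eventually.of_forall fun τ => ?_
    exact (hFc.comp (by fun_prop : Continuous fun s : ℝ => (τ, s))).aestronglyMeasurable
  · exact (hFc.comp (by fun_prop : Continuous fun s : ℝ => (t, s))).intervalIntegrable _ _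
  · exact (hc.comp (by fun_prop : Continuous fun s : ℝ => (t, s))).aestronglyMeasurable
  · refine Filter.Eventually.of_forall fun s hs τ hτ => hC (τ, s) ⟨hτ, ?_⟩
    rw [Set.uIoc_of_le zero_le_one] at hs
    exact ⟨hs.1.le, hs.2⟩
  · exact intervalIntegrable_const
  · refine Filter.Eventually.of_forall fun s hs τ hτ => ?_
    have h1 : HasDerivAt (fun τ : ℝ => (τ, s)) ((1:ℝ), (0:ℝ)) τ :=
      (hasDerivAt_id τ).prodMk (hasDerivAt_const τ s)
    exact ((hF.differentiable one_ne_zero) (τ, s)).hasFDerivAt.comp_hasDerivAt τ h1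

theorem aux_dot {a b : ℝ → Fin 3 → ℝ} {a' b' : Fin 3 → ℝ} {t : ℝ}
    (ha : HasDerivAt a a' t) (hb : HasDerivAt b b' t) :
    HasDerivAt (fun τ => dot3 (a τ) (b τ)) (dot3 a' (b t) + dot3 (a t) b') t := by
  rw [hasDerivAt_pi] at ha hb
  have := HasDerivAt.fun_sum (u := Finset.univ) fun i _ => (ha i).mul (hb i)
  simp only [dot3, ← Finset.sum_add_distrib]
  exact this

theorem aux_clm {c : ℝ → (ℝ × ℝ →L[ℝ] (Fin 3 → ℝ))} {c' : ℝ × ℝ →L[ℝ] (Fin 3 → ℝ)} {t : ℝ}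
    (hc : HasDerivAt c c' t) (v : ℝ × ℝ) : HasDerivAt (fun τ => c τ v) (c' v) t :=
  (ContinuousLinearMap.apply ℝ (Fin 3 → ℝ) v).hasFDerivAt.comp_hasDerivAt t hc

theorem aux_alg (L : ℝ × (Fin 3 → ℝ) →L[ℝ] (Fin 3 → ℝ)) (v w c : Fin 3 → ℝ)
    (hc : c = ![L (0, Pi.single 1 1) 2 - L (0, Pi.single 2 1) 1,
      L (0, Pi.single 2 1) 0 - L (0, Pi.single 0 1) 2,
      L (0, Pi.single 0 1) 1 - L (0, Pi.single 1 1) 0]) :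
    dot3 (L (1, 0) - cross3 v c) w = dot3 (L (1, v)) w - dot3 (L (0, w)) v := by
  have key : ∀ u : Fin 3 → ℝ, L (0, u) = u 0 • L (0, Pi.single 0 1) + u 1 • L (0, Pi.single 1 1)
      + u 2 • L (0, Pi.single 2 1) := by
    intro u
    rw [← map_smul, ← map_smul, ← map_smul, ← map_add, ← map_add]
    congr 1
    ext i
    · simp
    · fin_cases i <;> simp
  have h1 : L (1, v) = L (1, 0) + L (0, v) := by
    rw [← map_add]; simp
  rw [h1, key v, key w, hc]
  simp [dot3, cross3, Fin.sum_univ_three]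
  ring

set_option maxHeartbeats 1000000 in
/-- Transport formula for the circulation of a vector field `A` along a
co-moving closed loop `γ` advected by the flow `V`:
`Φ′(t) = ∫₀¹ (∂ₜA − V×(∇×A))(t, γ(t,s)) · ∂ₛγ(t,s) ds`. -/
theorem circulation_transport_formula
    (V : ℝ → (Fin 3 → ℝ) → (Fin 3 → ℝ))
    (γ : ℝ → ℝ → (Fin 3 → ℝ))
    (A : ℝ → (Fin 3 → ℝ) → (Fin 3 → ℝ))
    (hV : ContDiff ℝ (⊤ : ℕ∞) (fun p : ℝ × (Fin 3 → ℝ) => V p.1 p.2))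
    (hγ : ContDiff ℝ (⊤ : ℕ∞) (fun p : ℝ × ℝ => γ p.1 p.2))
    (hA : ContDiff ℝ (⊤ : ℕ∞) (fun p : ℝ × (Fin 3 → ℝ) => A p.1 p.2))
    (hadv : ∀ t s, deriv (fun τ => γ τ s) t = V t (γ t s))
    (hper : ∀ t s, γ t (s + 1) = γ t s) :
    ∀ t : ℝ,
      HasDerivAt (fun τ => ∫ s in (0:ℝ)..1,
          dot3 (A τ (γ τ s)) (deriv (fun σ => γ τ σ) s))
        (∫ s in (0:ℝ)..1,
          dot3 (deriv (fun τ => A τ (γ t s)) t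
              - cross3 (V t (γ t s)) (curl3 (A t) (γ t s)))
            (deriv (fun σ => γ t σ) s)) t := by
  intro t
  set G : ℝ × ℝ → (Fin 3 → ℝ) := fun p => γ p.1 p.2 with hG
  set B : ℝ × (Fin 3 → ℝ) → (Fin 3 → ℝ) := fun p => A p.1 p.2 with hB
  set W : ℝ × (Fin 3 → ℝ) → (Fin 3 → ℝ) := fun p => V p.1 p.2 with hW
  have hGd : Differentiable ℝ G := hγ.differentiable (by simp)
  have hBd : Differentiable ℝ B := hA.differentiable (by simp)
  have hG' : ContDiff ℝ (⊤ : ℕ∞) (fderiv ℝ G) := hγ.fderiv_right (by simp)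
  have hG'd : Differentiable ℝ (fderiv ℝ G) := hG'.differentiable (by simp)
  have lt : ∀ τ s : ℝ, HasDerivAt (fun τ : ℝ => (τ, s)) ((1:ℝ), (0:ℝ)) τ := fun τ s =>
    (hasDerivAt_id τ).prodMk (hasDerivAt_const τ s)
  have ls : ∀ τ s : ℝ, HasDerivAt (fun s : ℝ => (τ, s)) ((0:ℝ), (1:ℝ)) s := fun τ s =>
    (hasDerivAt_const s τ).prodMk (hasDerivAt_id s)
  have gs : ∀ τ s, HasDerivAt (fun σ => γ τ σ) (fderiv ℝ G (τ, s) (0, 1)) s := fun τ s =>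
    (hGd (τ, s)).hasFDerivAt.comp_hasDerivAt s (ls τ s)
  have gt : ∀ τ s, HasDerivAt (fun τ => γ τ s) (fderiv ℝ G (τ, s) (1, 0)) τ := fun τ s =>
    HasFDerivAt.comp_hasDerivAt (f := fun τ => (τ, s)) τ (hGd (τ, s)).hasFDerivAt (lt τ s)
  have gV : ∀ τ s, fderiv ℝ G (τ, s) (1, 0) = V τ (γ τ s) := fun τ s => by
    rw [← hadv, (gt τ s).deriv]
  have gs' : ∀ τ s, deriv (fun σ => γ τ σ) s = fderiv ℝ G (τ, s) (0, 1) := fun τ s => (gs τ s).deriv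
  simp only [gs']
  set F : ℝ × ℝ → ℝ := fun p => dot3 (B (p.1, G p)) (fderiv ℝ G p (0, 1)) with hFdef
  have hF : ContDiff ℝ (⊤ : ℕ∞) F := by
    have e1 : ContDiff ℝ (⊤ : ℕ∞) (fun p : ℝ × ℝ => B (p.1, G p)) :=
      hA.comp (contDiff_fst.prodMk hγ)
    have e2 : ContDiff ℝ (⊤ : ℕ∞) (fun p : ℝ × ℝ => fderiv ℝ G p (0, 1)) :=
      hG'.clm_apply contDiff_const
    rw [contDiff_pi] at e1 e2
    exact ContDiff.sum fun i _ => (e1 i).mul (e2 i)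
  have main := aux_param F (hF.of_le (by exact_mod_cast le_top)) t
  have gc : Continuous (fun s => γ t s) := hγ.continuous.comp
    (by fun_prop : Continuous fun s : ℝ => (t, s))
  have halg : ∀ s, dot3 (deriv (fun τ => A τ (γ t s)) t
      - cross3 (V t (γ t s)) (curl3 (A t) (γ t s))) (fderiv ℝ G (t, s) (0, 1))
      = dot3 (fderiv ℝ B (t, γ t s) (1, V t (γ t s))) (fderiv ℝ G (t, s) (0, 1))
        - dot3 (fderiv ℝ B (t, γ t s) (0, fderiv ℝ G (t, s) (0, 1))) (V t (γ t s)) := by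
    intro s
    set L := fderiv ℝ B (t, γ t s) with hL
    have hLB : HasFDerivAt B L (t, γ t s) := (hBd _).hasFDerivAt
    have dt : deriv (fun τ => A τ (γ t s)) t = L (1, 0) :=
      (HasFDerivAt.comp_hasDerivAt (f := fun τ => (τ, γ t s)) t hLB
        ((hasDerivAt_id t).prodMk (hasDerivAt_const t (γ t s)))).deriv
    have pd : ∀ i j, pd3 j (fun y => A t y i) (γ t s) = L (0, Pi.single j 1) i := by
      intro i j
      have h0 : HasFDerivAt (fun y => A t y) (L.comp (ContinuousLinearMap.inr ℝ ℝ (Fin 3 → ℝ)))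
          (γ t s) := hLB.comp (γ t s) (hasFDerivAt_prodMk_right t (γ t s))
      rw [pd3, ((hasFDerivAt_pi'.1 h0) i).fderiv]
      simp
    have alg := aux_alg L (V t (γ t s)) (fderiv ℝ G (t, s) (0, 1)) (curl3 (A t) (γ t s))
      (by simp only [curl3, pd])
    rw [dt, alg]
  -- the pointwise identity
  have hH : ∀ s, HasDerivAt (fun s => dot3 (A t (γ t s)) (V t (γ t s)))
      (fderiv ℝ F (t, s) (1, 0) - dot3 (deriv (fun τ => A τ (γ t s)) t
              - cross3 (V t (γ t s)) (curl3 (A t) (γ t s))) (fderiv ℝ G (t, s) (0, 1))) s := by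
    intro s
    set L := fderiv ℝ B (t, γ t s) with hL
    have hLB : HasFDerivAt B L (t, γ t s) := (hBd _).hasFDerivAt
    have sym : fderiv ℝ (fderiv ℝ G) (t, s) (1, 0) (0, 1)
        = fderiv ℝ (fderiv ℝ G) (t, s) (0, 1) (1, 0) :=
      (hγ.contDiffAt.isSymmSndFDerivAt (by simp only [minSmoothness_of_isRCLikeNormedField]; exact WithTop.coe_le_coe.2 (le_top : (2:ℕ∞) ≤ ⊤))) _ _
    rw [halg]
    -- time derivative of F
    have b1 : HasDerivAt (fun τ => B (τ, G (τ, s))) (L (1, V t (γ t s))) t := by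
      have := gt t s
      rw [gV] at this
      exact HasFDerivAt.comp_hasDerivAt (f := fun τ => (τ, γ τ s)) t hLB
        ((hasDerivAt_id t).prodMk this)
    have b2 : HasDerivAt (fun τ => fderiv ℝ G (τ, s) (0, 1))
        (fderiv ℝ (fderiv ℝ G) (t, s) (1, 0) (0, 1)) t := by
      have := aux_clm (HasFDerivAt.comp_hasDerivAt (f := fun τ => (τ, s)) t (hG'd (t, s)).hasFDerivAt
        (lt t s)) ((0:ℝ), (1:ℝ))
      exact this
    have b3 := aux_dot b1 b2
    have b4 : HasDerivAt (fun τ => F (τ, s)) (fderiv ℝ F (t, s) (1, 0)) t :=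
      HasFDerivAt.comp_hasDerivAt (f := fun τ => (τ, s)) t
        ((hF.differentiable (by simp)) (t, s)).hasFDerivAt (lt t s)
    have b5 := b4.unique b3
    -- space derivative
    have c1 : HasDerivAt (fun s => A t (γ t s)) (L (0, fderiv ℝ G (t, s) (0, 1))) s :=
      HasFDerivAt.comp_hasDerivAt (f := fun s => (t, γ t s)) s hLB
        ((hasDerivAt_const s t).prodMk (gs t s))
    have c2 : HasDerivAt (fun s => V t (γ t s))
        (fderiv ℝ (fderiv ℝ G) (t, s) (0, 1) (1, 0)) s := by
      have := aux_clm (HasFDerivAt.comp_hasDerivAt (f := fun s => (t, s)) s (hG'd (t, s)).hasFDerivAt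
        (ls t s)) ((1:ℝ), (0:ℝ))
      simp only [← gV]
      exact this
    convert aux_dot c1 c2 using 1
    rw [b5, sym]
    simp only [hB, hG]
    ring
  have hFt : Continuous (fun s => fderiv ℝ F (t, s) (1, 0)) :=
    ((hF.continuous_fderiv (by simp)).clm_apply continuous_const).comp
      (by fun_prop : Continuous fun s : ℝ => (t, s))
  have hT : Continuous (fun s => dot3 (deriv (fun τ => A τ (γ t s)) t
      - cross3 (V t (γ t s)) (curl3 (A t) (γ t s))) (fderiv ℝ G (t, s) (0, 1))) := by
    have hLc : Continuous (fun s => fderiv ℝ B (t, γ t s)) :=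
      (hA.continuous_fderiv (by simp)).comp (continuous_const.prodMk gc)
    have hwc : Continuous (fun s => fderiv ℝ G (t, s) (0, 1)) :=
      (hG'.continuous.clm_apply continuous_const).comp
        (by fun_prop : Continuous fun s : ℝ => (t, s))
    have hvc : Continuous (fun s => V t (γ t s)) :=
      hV.continuous.comp (continuous_const.prodMk gc)
    simp only [halg]
    have d1 := hLc.clm_apply ((continuous_const (y := (1:ℝ))).prodMk hvc)
    have d2 := hLc.clm_apply ((continuous_const (y := (0:ℝ))).prodMk hwc)
    rw [continuous_pi_iff] at d1 d2 hwc hvc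
    exact (continuous_finsetSum _ fun i _ => (d1 i).mul (hwc i)).sub
      (continuous_finsetSum _ fun i _ => (d2 i).mul (hvc i))
  have hint := intervalIntegral.integral_eq_sub_of_hasDerivAt (a := 0) (b := 1)
    (fun s _ => hH s) ((hFt.sub hT).intervalIntegrable _ _)
  rw [intervalIntegral.integral_sub (hFt.intervalIntegrable _ _) (hT.intervalIntegrable _ _)] at hint
  have hp : γ t 1 = γ t 0 := by simpa using hper t 0
  rw [hp, sub_self, sub_eq_zero] at hint
  rw [← hint]
  exact main
end

section
/- Let V : ℝ × ℝ³ → ℝ³ be smooth and let x : ℝ × ℝ → ℝ³ be a smooth map satisfying ∂ₜx(t,s) = V(t, x(t,s)) and x(t, s+1) = x(t,s) for all (t,s) (an advected closed loop). Let A : ℝ × ℝ³ → ℝ³ and φ : ℝ × ℝ³ → ℝ be smooth with ∂ₜA = V×(∇×A) − ∇φ for all (t,x). Then the circulation Φ(t) = ∫₀¹ A(t, x(t,s)) · ∂ₛx(t,s) ds is constant in t. -/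
open MeasureTheory

lemma aux_split (U : ℝ × (Fin 3 → ℝ) → ℝ) (hU : ContDiff ℝ (⊤ : ℕ∞) U) (t c : ℝ)
    (x v : Fin 3 → ℝ) :
    fderiv ℝ U (t, x) (c, v) = c * deriv (fun τ => U (τ, x)) t
      + ∑ j, v j * pd3 j (fun y => U (t, y)) x := by
  have hd : HasFDerivAt U (fderiv ℝ U (t, x)) (t, x) :=
    (hU.differentiable (by simp) _).hasFDerivAt
  have h1 : HasDerivAt (fun τ => U (τ, x)) (fderiv ℝ U (t, x) (1, 0)) t := by
    have : HasDerivAt (fun τ : ℝ => (τ, x)) ((1 : ℝ), (0 : Fin 3 → ℝ)) t :=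
      (hasDerivAt_id t).prodMk (hasDerivAt_const t x)
    exact hd.comp_hasDerivAt t this
  have h2 : HasFDerivAt (fun y => U (t, y))
      ((fderiv ℝ U (t, x)).comp (ContinuousLinearMap.inr ℝ ℝ (Fin 3 → ℝ))) x :=
    HasFDerivAt.comp x hd (hasFDerivAt_prodMk_right t x)
  rw [h1.deriv]
  simp only [pd3, h2.fderiv]
  have hv : ((c, v) : ℝ × (Fin 3 → ℝ)) = c • (1, 0) + ∑ j, v j • ((0 : ℝ), (Pi.single j 1 : Fin 3 → ℝ)) := by
    ext k
    · simp [Fin.sum_univ_three]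
    · fin_cases k <;> simp [Fin.sum_univ_three]
  conv_lhs => rw [hv]
  simp only [map_add, map_sum, map_smul, smul_eq_mul, ContinuousLinearMap.comp_apply,
    ContinuousLinearMap.inr_apply]

lemma aux_point (V : ℝ → (Fin 3 → ℝ) → (Fin 3 → ℝ))
    (A : ℝ → (Fin 3 → ℝ) → (Fin 3 → ℝ))
    (φ : ℝ → (Fin 3 → ℝ) → ℝ)
    (hA : ContDiff ℝ (⊤ : ℕ∞) (fun p : ℝ × (Fin 3 → ℝ) => A p.1 p.2))
    (hind : ∀ t x, deriv (fun τ => A τ x) t =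
      cross3 (V t x) (curl3 (A t) x) - grad3 (φ t) x)
    (t : ℝ) (x S : Fin 3 → ℝ) :
    ∑ i, (fderiv ℝ (fun p : ℝ × (Fin 3 → ℝ) => A p.1 p.2 i) (t, x) (1, V t x) * S i
      - fderiv ℝ (fun p : ℝ × (Fin 3 → ℝ) => A p.1 p.2 i) (t, x) (0, S) * V t x i)
      = - ∑ j, S j * pd3 j (φ t) x := by
  have hAi : ∀ i, ContDiff ℝ (⊤ : ℕ∞) (fun p : ℝ × (Fin 3 → ℝ) => A p.1 p.2 i) :=
    fun i => contDiff_pi.1 hA i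
  have hdA : Differentiable ℝ (fun τ => A τ x) :=
    (hA.differentiable (by simp)).comp (differentiable_id.prodMk (differentiable_const x))
  have hd : ∀ i, deriv (fun τ => A τ x i) t =
      (cross3 (V t x) (curl3 (A t) x) - grad3 (φ t) x) i := by
    intro i
    rw [← hind]
    exact ((hasDerivAt_pi.1 (hdA t).hasDerivAt) i).deriv
  simp only [aux_split _ (hAi _), hd]
  simp [Fin.sum_univ_three, cross3, curl3, grad3]
  ring

/-- Alfvén's (Kelvin's) circulation law: if `∂ₜA = V×(∇×A) − ∇φ`, then the
circulation `Φ(t) = ∫₀¹ A(t, γ(t,s)) · ∂ₛγ(t,s) ds` along every co-moving closed loop is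
constant in time. -/
theorem circulation_constant
    (V : ℝ → (Fin 3 → ℝ) → (Fin 3 → ℝ))
    (γ : ℝ → ℝ → (Fin 3 → ℝ))
    (A : ℝ → (Fin 3 → ℝ) → (Fin 3 → ℝ))
    (φ : ℝ → (Fin 3 → ℝ) → ℝ)
    (hV : ContDiff ℝ (⊤ : ℕ∞) (fun p : ℝ × (Fin 3 → ℝ) => V p.1 p.2))
    (hγ : ContDiff ℝ (⊤ : ℕ∞) (fun p : ℝ × ℝ => γ p.1 p.2))
    (hA : ContDiff ℝ (⊤ : ℕ∞) (fun p : ℝ × (Fin 3 → ℝ) => A p.1 p.2))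
    (hφ : ContDiff ℝ (⊤ : ℕ∞) (fun p : ℝ × (Fin 3 → ℝ) => φ p.1 p.2))
    (hadv : ∀ t s, deriv (fun τ => γ τ s) t = V t (γ t s))
    (hper : ∀ t s, γ t (s + 1) = γ t s)
    (hind : ∀ t x, deriv (fun τ => A τ x) t =
      cross3 (V t x) (curl3 (A t) x) - grad3 (φ t) x) :
    ∀ t₁ t₂ : ℝ,
      (∫ s in (0:ℝ)..1, dot3 (A t₁ (γ t₁ s)) (deriv (fun σ => γ t₁ σ) s)) =
        ∫ s in (0:ℝ)..1, dot3 (A t₂ (γ t₂ s)) (deriv (fun σ => γ t₂ σ) s) := by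
  intro t₁ t₂
  set g : ℝ × ℝ → (Fin 3 → ℝ) := fun p => γ p.1 p.2 with hg
  have hgd : ∀ p, HasFDerivAt g (fderiv ℝ g p) p := fun p =>
    (hγ.differentiable (by simp) p).hasFDerivAt
  have hS : ∀ t s, deriv (fun σ => γ t σ) s = fderiv ℝ g (t, s) (0, 1) := by
    intro t s
    have : HasDerivAt (fun σ : ℝ => (t, σ)) ((0 : ℝ), (1 : ℝ)) s :=
      (hasDerivAt_const s t).prodMk (hasDerivAt_id s)
    exact ((hgd (t, s)).comp_hasDerivAt s this).deriv
  have hT : ∀ p : ℝ × ℝ, fderiv ℝ g p (1, 0) = V p.1 (g p) := by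
    rintro ⟨t, s⟩
    have : HasDerivAt (fun τ : ℝ => (τ, s)) ((1 : ℝ), (0 : ℝ)) t :=
      (hasDerivAt_id t).prodMk (hasDerivAt_const t s)
    rw [← ((hgd (t, s)).comp_hasDerivAt t this).deriv]
    exact hadv t s
  have hg' : ContDiff ℝ (⊤ : ℕ∞) (fderiv ℝ g) := hγ.fderiv_right (by simp)
  have hg'd : ∀ p, HasFDerivAt (fderiv ℝ g) (fderiv ℝ (fderiv ℝ g) p) p := fun p =>
    (hg'.differentiable (by simp) p).hasFDerivAt
  have hsymm : ∀ p, fderiv ℝ (fderiv ℝ g) p (1, 0) (0, 1)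
      = fderiv ℝ (fderiv ℝ g) p (0, 1) (1, 0) := by
    intro p
    exact (hγ.contDiffAt.isSymmSndFDerivAt (by simpa using (WithTop.coe_le_coe.2 le_top : ((2:ℕ∞):WithTop ℕ∞) ≤ ((⊤:ℕ∞):WithTop ℕ∞)))) _ _
  -- composite map
  have hq : ContDiff ℝ (⊤ : ℕ∞) (fun p : ℝ × ℝ => (p.1, g p)) := contDiff_fst.prodMk hγ
  have hqd : ∀ p, HasFDerivAt (fun p : ℝ × ℝ => (p.1, g p))
      ((ContinuousLinearMap.fst ℝ ℝ ℝ).prod (fderiv ℝ g p)) p := fun p =>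
    (hasFDerivAt_fst).prodMk (hgd p)
  have hAi : ∀ i, ContDiff ℝ (⊤ : ℕ∞) (fun p : ℝ × (Fin 3 → ℝ) => A p.1 p.2 i) :=
    fun i => contDiff_pi.1 hA i
  have had : ∀ i p, HasFDerivAt (fun p : ℝ × ℝ => A p.1 (g p) i)
      ((fderiv ℝ (fun p : ℝ × (Fin 3 → ℝ) => A p.1 p.2 i) (p.1, g p)).comp
        ((ContinuousLinearMap.fst ℝ ℝ ℝ).prod (fderiv ℝ g p))) p := fun i p =>
    HasFDerivAt.comp (g := fun p : ℝ × (Fin 3 → ℝ) => A p.1 p.2 i) p (((hAi i).differentiable (by simp) (p.1, g p)).hasFDerivAt) (hqd p)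
  have hφd : ∀ p, HasFDerivAt (fun p : ℝ × ℝ => φ p.1 (g p))
      ((fderiv ℝ (fun p : ℝ × (Fin 3 → ℝ) => φ p.1 p.2) (p.1, g p)).comp
        ((ContinuousLinearMap.fst ℝ ℝ ℝ).prod (fderiv ℝ g p))) p := fun p =>
    HasFDerivAt.comp (g := fun p : ℝ × (Fin 3 → ℝ) => φ p.1 p.2) p ((hφ.differentiable (by simp) (p.1, g p)).hasFDerivAt) (hqd p)
  have hwd : ∀ (w : ℝ × ℝ) i p, HasFDerivAt (fun p => fderiv ℝ g p w i)
      (((ContinuousLinearMap.proj i : (Fin 3 → ℝ) →L[ℝ] ℝ).comp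
        (ContinuousLinearMap.apply ℝ (Fin 3 → ℝ) w)).comp (fderiv ℝ (fderiv ℝ g) p)) p :=
    fun w i p => HasFDerivAt.comp p (((ContinuousLinearMap.proj i : (Fin 3 → ℝ) →L[ℝ] ℝ).comp
        (ContinuousLinearMap.apply ℝ (Fin 3 → ℝ) w)).hasFDerivAt) (hg'd p)
  let F : ℝ × ℝ → ℝ := fun p => ∑ i, A p.1 (g p) i * fderiv ℝ g p (0, 1) i
  let G : ℝ × ℝ → ℝ := fun p => φ p.1 (g p) - ∑ i, A p.1 (g p) i * fderiv ℝ g p (1, 0) i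
  have hFd := fun p => HasFDerivAt.fun_sum (u := Finset.univ)
    (fun i _ => (had i p).mul (hwd (0, 1) i p))
  have hGd := fun p => (hφd p).sub (HasFDerivAt.fun_sum (u := Finset.univ)
    (fun i _ => (had i p).mul (hwd (1, 0) i p)))
  have hdiv : ∀ p, fderiv ℝ F p (1, 0) + fderiv ℝ G p (0, 1) = 0 := by
    intro p
    have hp := aux_point V A φ hA hind p.1 (g p) (fderiv ℝ g p (0, 1))
    have e1 : fderiv ℝ F p = _ := (hFd p).fderiv
    have e2 : fderiv ℝ G p = _ := (hGd p).fderiv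
    rw [e1, e2]
    have hs := fun i => congrFun (hsymm p) i
    have h3 := aux_split _ hφ p.1 0 (g p) (fderiv ℝ g p (0, 1))
    simp [Fin.sum_univ_three, hT, hs] at hp h3 ⊢
    rw [h3]
    linarith
  have hFc : ContDiff ℝ (⊤ : ℕ∞) F := by
    refine ContDiff.sum fun i _ => ((hAi i).comp hq).mul ?_
    exact contDiff_pi.1 (hg'.clm_apply contDiff_const) i
  have hGc : ContDiff ℝ (⊤ : ℕ∞) G := by
    refine (hφ.comp hq).sub (ContDiff.sum fun i _ => ((hAi i).comp hq).mul ?_)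
    exact contDiff_pi.1 (hg'.clm_apply contDiff_const) i
  have key := integral2_divergence_prod_of_hasFDerivAt_off_countable F G
    (fderiv ℝ F) (fderiv ℝ G) t₁ 0 t₂ 1 ∅ Set.countable_empty
    hFc.continuous.continuousOn hGc.continuous.continuousOn
    (fun p _ => (hFc.differentiable (by simp) p).hasFDerivAt)
    (fun p _ => (hGc.differentiable (by simp) p).hasFDerivAt)
    (by simp only [hdiv]; exact integrableOn_zero)
  have hG01 : ∀ t, G (t, 1) = G (t, 0) := by
    intro t
    have : γ t 1 = γ t 0 := by simpa using hper t 0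
    simp only [G, hT]
    simp only [hg, this]
  simp only [hdiv, hG01] at key
  simp only [hS, dot3]
  simp only [intervalIntegral.integral_zero] at key
  change (∫ s in (0:ℝ)..1, F (t₁, s)) = ∫ s in (0:ℝ)..1, F (t₂, s)
  linarith
end

section
/- Define the bracket {a,b} := ∂_y a ∂ₓ b − ∂ₓ a ∂_y b for functions on ℝ². Let ω, ψ, φ : ℝ × ℝ² → ℝ be smooth, with ω(t,·) and ψ(t,·) vanishing outside a fixed compact set K ⊆ ℝ² for every t, and suppose that for all (t,x): ∂ₜω + {φ, ω} = {Δψ, ψ} and ∂ₜψ + {φ, ψ} = 0, where Δ is the Laplacian in the spatial variables. Then for every smooth g : ℝ → ℝ, the quantity t ↦ ∫_{ℝ²} ω(t,x) g(ψ(t,x)) dx is constant in t. -/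
open MeasureTheory

/-- `i`-th partial derivative of a scalar field on ℝ². -/
noncomputable def pd2 (i : Fin 2) (f : (Fin 2 → ℝ) → ℝ) (x : Fin 2 → ℝ) : ℝ :=
  fderiv ℝ f x (Pi.single i 1)

/-- Gradient of a scalar field on ℝ². -/
noncomputable def grad2 (f : (Fin 2 → ℝ) → ℝ) (x : Fin 2 → ℝ) : Fin 2 → ℝ :=
  fun i => pd2 i f x

/-- Divergence of a vector field on ℝ². -/
noncomputable def div2 (F : (Fin 2 → ℝ) → (Fin 2 → ℝ)) (x : Fin 2 → ℝ) : ℝ :=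
  ∑ i, pd2 i (fun y => F y i) x

/-- The two-dimensional Jacobian (canonical) bracket {a,b} = ∂_y a ∂ₓ b − ∂ₓ a ∂_y b. -/
noncomputable def jbr (a b : (Fin 2 → ℝ) → ℝ) (x : Fin 2 → ℝ) : ℝ :=
  pd2 1 a x * pd2 0 b x - pd2 0 a x * pd2 1 b x

/-- Laplacian of a scalar field on ℝ². -/
noncomputable def lap2 (f : (Fin 2 → ℝ) → ℝ) (x : Fin 2 → ℝ) : ℝ :=
  pd2 0 (pd2 0 f) x + pd2 1 (pd2 1 f) x

theorem mhd_pd2_contDiff (i : Fin 2) {f : (Fin 2 → ℝ) → ℝ} (hf : ContDiff ℝ (⊤ : ℕ∞) f) :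
    ContDiff ℝ (⊤ : ℕ∞) (pd2 i f) := by
  have h : ContDiff ℝ (⊤ : ℕ∞) (fderiv ℝ f) := hf.fderiv_right (by simp)
  exact h.clm_apply contDiff_const

theorem mhd_ibp (i : Fin 2) {f b : (Fin 2 → ℝ) → ℝ} (hf : ContDiff ℝ (⊤ : ℕ∞) f)
    (hb : ContDiff ℝ (⊤ : ℕ∞) b) (hc : HasCompactSupport b) :
    Integrable (fun x => f x * pd2 i b x) ∧
    ∫ x, f x * pd2 i b x = - ∫ x, pd2 i f x * b x := by
  have hc' : HasCompactSupport (pd2 i b) :=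
    hc.fderiv_apply (𝕜 := ℝ) (Pi.single i 1)
  have h1 : Integrable (fun x => f x * pd2 i b x) :=
    (hf.continuous.mul (mhd_pd2_contDiff i hb).continuous).integrable_of_hasCompactSupport
      hc'.mul_left
  refine ⟨h1, ?_⟩
  refine integral_mul_fderiv_eq_neg_fderiv_mul_of_integrable (v := Pi.single i 1) ?_ h1 ?_ ?_ ?_
  · exact ((mhd_pd2_contDiff i hf).continuous.mul hb.continuous).integrable_of_hasCompactSupport
      hc.mul_left
  · exact (hf.continuous.mul hb.continuous).integrable_of_hasCompactSupport hc.mul_left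
  · exact fun x _ => (hf.differentiable (by simp)) x
  · exact fun x _ => (hb.differentiable (by simp)) x

theorem mhd_pd2_comm {f : (Fin 2 → ℝ) → ℝ} (hf : ContDiff ℝ (⊤ : ℕ∞) f) (x : Fin 2 → ℝ)
    (i j : Fin 2) : pd2 i (pd2 j f) x = pd2 j (pd2 i f) x := by
  have h : Differentiable ℝ (fderiv ℝ f) :=
    (hf.fderiv_right (m := (⊤ : ℕ∞)) (by simp)).differentiable (by simp)
  have key : ∀ i j : Fin 2, pd2 i (pd2 j f) x
      = fderiv ℝ (fderiv ℝ f) x (Pi.single i 1) (Pi.single j 1) := by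
    intro i j
    have := ((h x).hasFDerivAt.clm_apply
      (hasFDerivAt_const (Pi.single j 1 : Fin 2 → ℝ) x)).fderiv
    unfold pd2
    rw [this]
    simp
  rw [key, key]
  exact (hf.contDiffAt.isSymmSndFDerivAt (by
    rw [minSmoothness_of_isRCLikeNormedField]
    exact WithTop.coe_le_coe.2 (le_top : (2 : ℕ∞) ≤ ⊤))).eq _ _

theorem mhd_int_jbr {a b : (Fin 2 → ℝ) → ℝ} (ha : ContDiff ℝ (⊤ : ℕ∞) a)
    (hb : ContDiff ℝ (⊤ : ℕ∞) b) (hc : HasCompactSupport b) :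
    Integrable (jbr a b) ∧ ∫ x, jbr a b x = 0 := by
  obtain ⟨i1, e1⟩ := mhd_ibp 0 (mhd_pd2_contDiff 1 ha) hb hc
  obtain ⟨i2, e2⟩ := mhd_ibp 1 (mhd_pd2_contDiff 0 ha) hb hc
  refine ⟨i1.sub i2, ?_⟩
  unfold jbr
  rw [integral_sub i1 i2, e1, e2]
  simp_rw [mhd_pd2_comm ha _ 0 1]
  simp

theorem mhd_deriv_int {F : ℝ → (Fin 2 → ℝ) → ℝ}
    (hF : ContDiff ℝ (⊤ : ℕ∞) (fun p : ℝ × (Fin 2 → ℝ) => F p.1 p.2))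
    {K : Set (Fin 2 → ℝ)} (hK : IsCompact K) (hs : ∀ t x, x ∉ K → F t x = 0) (t : ℝ) :
    HasDerivAt (fun s => ∫ x, F s x) (∫ x, deriv (fun τ => F τ x) t) t := by
  have hd : ∀ s x, HasDerivAt (fun τ => F τ x)
      (fderiv ℝ (fun p : ℝ × (Fin 2 → ℝ) => F p.1 p.2) (s, x) (1, 0)) s := by
    intro s x
    have h1 : HasDerivAt (fun τ : ℝ => (τ, x)) ((1 : ℝ), (0 : Fin 2 → ℝ)) s :=
      (hasDerivAt_id s).prodMk (hasDerivAt_const s x)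
    exact ((hF.differentiable (by simp)) (s, x)).hasFDerivAt.comp_hasDerivAt s h1
  have hcont : Continuous (fun p : ℝ × (Fin 2 → ℝ) => deriv (fun τ => F τ p.2) p.1) := by
    have : (fun p : ℝ × (Fin 2 → ℝ) => deriv (fun τ => F τ p.2) p.1) =
        fun p => fderiv ℝ (fun p : ℝ × (Fin 2 → ℝ) => F p.1 p.2) p (1, 0) := by
      funext p; exact (hd p.1 p.2).deriv
    rw [this]
    exact (hF.continuous_fderiv (by simp)).clm_apply continuous_const
  have hF0 : ∀ s, Continuous (F s) := fun s =>
    hF.continuous.comp (by fun_prop : Continuous fun x : Fin 2 → ℝ => (s, x))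
  obtain ⟨C, hC⟩ := ((isCompact_Icc (a := t - 1) (b := t + 1)).prod hK).exists_bound_of_continuousOn
    hcont.continuousOn
  refine (hasDerivAt_integral_of_dominated_loc_of_deriv_le (μ := volume)
    (F := F) (F' := fun s x => deriv (fun τ => F τ x) s)
    (bound := K.indicator fun _ => C) (s := Set.Icc (t - 1) (t + 1))
    (Icc_mem_nhds (by linarith) (by linarith)) ?_ ?_ ?_ ?_ ?_ ?_).2
  · exact Filter.Eventually.of_forall fun s => (hF0 s).aestronglyMeasurable
  · exact (hF0 t).integrable_of_hasCompactSupport (HasCompactSupport.intro hK (hs t))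
  · exact (hcont.comp (by fun_prop : Continuous fun x : Fin 2 → ℝ => (t, x))).aestronglyMeasurable
  · refine Filter.Eventually.of_forall fun x s hsm => ?_
    by_cases hx : x ∈ K
    · simpa [hx] using hC (s, x) ⟨hsm, hx⟩
    · have : (fun τ => F τ x) = fun _ => 0 := by funext τ; exact hs τ x hx
      simp [hx, this]
  · exact (integrable_indicator_iff hK.measurableSet).2
      (integrableOn_const hK.measure_lt_top.ne)
  · exact Filter.Eventually.of_forall fun x s _ => (hd s x).differentiableAt.hasDerivAt

theorem mhd_antideriv {g : ℝ → ℝ} (hg : ContDiff ℝ (⊤ : ℕ∞) g) :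
    ∃ G : ℝ → ℝ, ContDiff ℝ (⊤ : ℕ∞) G ∧ G 0 = 0 ∧ ∀ x, HasDerivAt G (g x) x := by
  have h : ∀ x, HasDerivAt (fun u => ∫ y in (0 : ℝ)..u, g y) (g x) x := fun x =>
    intervalIntegral.integral_hasDerivAt_right (hg.continuous.intervalIntegrable _ _)
      hg.continuous.aestronglyMeasurable.stronglyMeasurableAtFilter hg.continuous.continuousAt
  refine ⟨fun u => ∫ y in (0 : ℝ)..u, g y, ?_, by simp, h⟩
  refine contDiff_infty_iff_deriv.2 ⟨fun x => (h x).differentiableAt, ?_⟩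
  rwa [show deriv (fun u => ∫ y in (0 : ℝ)..u, g y) = g from funext fun x => (h x).deriv]

theorem mhd_pd2_comp (i : Fin 2) {G : ℝ → ℝ} {G' : ℝ} {f : (Fin 2 → ℝ) → ℝ} {x : Fin 2 → ℝ}
    (hf : DifferentiableAt ℝ f x) (hG : HasDerivAt G G' (f x)) :
    pd2 i (fun y => G (f y)) x = G' * pd2 i f x := by
  have := (hG.comp_hasFDerivAt x hf.hasFDerivAt).fderiv
  unfold pd2
  rw [show (fun y => G (f y)) = G ∘ f from rfl, this]
  simp

theorem mhd_pd2_mul (i : Fin 2) {u v : (Fin 2 → ℝ) → ℝ} {x : Fin 2 → ℝ}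
    (hu : DifferentiableAt ℝ u x) (hv : DifferentiableAt ℝ v x) :
    pd2 i (fun y => u y * v y) x = u x * pd2 i v x + v x * pd2 i u x := by
  unfold pd2
  rw [fderiv_fun_mul hu hv]
  simp

/-- For the reduced MHD system `∂ₜω + {φ,ω} = {Δψ,ψ}`, `∂ₜψ + {φ,ψ} = 0`,
the Casimir `∫ ω g(ψ)` is a constant of motion for every smooth `g`. -/
theorem reduced_MHD_casimir_constant
    (ω ψ φ : ℝ → (Fin 2 → ℝ) → ℝ)
    (hω : ContDiff ℝ (⊤ : ℕ∞) (fun p : ℝ × (Fin 2 → ℝ) => ω p.1 p.2))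
    (hψ : ContDiff ℝ (⊤ : ℕ∞) (fun p : ℝ × (Fin 2 → ℝ) => ψ p.1 p.2))
    (hφ : ContDiff ℝ (⊤ : ℕ∞) (fun p : ℝ × (Fin 2 → ℝ) => φ p.1 p.2))
    (K : Set (Fin 2 → ℝ)) (hK : IsCompact K)
    (hωsupp : ∀ t x, x ∉ K → ω t x = 0)
    (hψsupp : ∀ t x, x ∉ K → ψ t x = 0)
    (hωeq : ∀ t x, deriv (fun τ => ω τ x) t + jbr (φ t) (ω t) x =
      jbr (fun y => lap2 (ψ t) y) (ψ t) x)
    (hψeq : ∀ t x, deriv (fun τ => ψ τ x) t + jbr (φ t) (ψ t) x = 0)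
    (g : ℝ → ℝ) (hg : ContDiff ℝ (⊤ : ℕ∞) g) :
    ∀ t₁ t₂ : ℝ,
      (∫ x : Fin 2 → ℝ, ω t₁ x * g (ψ t₁ x)) =
        ∫ x : Fin 2 → ℝ, ω t₂ x * g (ψ t₂ x) := by
  have hslice : ∀ {f : ℝ → (Fin 2 → ℝ) → ℝ},
      ContDiff ℝ (⊤ : ℕ∞) (fun p : ℝ × (Fin 2 → ℝ) => f p.1 p.2) →
      ∀ t, ContDiff ℝ (⊤ : ℕ∞) (f t) := fun hf t =>
    hf.comp (contDiff_const.prodMk contDiff_id : ContDiff ℝ _ fun x : Fin 2 → ℝ => (t, x))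
  have htslice : ∀ {f : ℝ → (Fin 2 → ℝ) → ℝ},
      ContDiff ℝ (⊤ : ℕ∞) (fun p : ℝ × (Fin 2 → ℝ) => f p.1 p.2) →
      ∀ x, Differentiable ℝ (fun t => f t x) := fun hf x =>
    (hf.comp (contDiff_id.prodMk contDiff_const :
      ContDiff ℝ _ fun t : ℝ => (t, x))).differentiable (by simp)
  obtain ⟨G, hG, hG0, hGd⟩ := mhd_antideriv hg
  have hgd : ∀ y, HasDerivAt g (deriv g y) y := fun y =>
    ((hg.differentiable (by simp)) y).hasDerivAt
  have hF : ContDiff ℝ (⊤ : ℕ∞) (fun p : ℝ × (Fin 2 → ℝ) => ω p.1 p.2 * g (ψ p.1 p.2)) :=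
    hω.mul (hg.comp hψ)
  have hder : ∀ t, HasDerivAt (fun s => ∫ x, ω s x * g (ψ s x)) 0 t := by
    intro t
    have h := mhd_deriv_int (F := fun t x => ω t x * g (ψ t x)) hF hK
      (fun t x hx => by simp [hωsupp t x hx]) t
    have hψt := hslice hψ t
    have hωt := hslice hω t
    have hlap : ContDiff ℝ (⊤ : ℕ∞) (fun y => lap2 (ψ t) y) :=
      (mhd_pd2_contDiff 0 (mhd_pd2_contDiff 0 hψt)).add
        (mhd_pd2_contDiff 1 (mhd_pd2_contDiff 1 hψt))
    obtain ⟨i1, e1⟩ := mhd_int_jbr hlap (hG.comp hψt)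
      (HasCompactSupport.intro hK fun x hx => by simp [hψsupp t x hx, hG0])
    obtain ⟨i2, e2⟩ := mhd_int_jbr (b := fun x => ω t x * g (ψ t x)) (hslice hφ t)
      (hslice (f := fun t x => ω t x * g (ψ t x)) hF t)
      (HasCompactSupport.intro hK fun x hx => by simp [hωsupp t x hx])
    have hpt : ∀ x, deriv (fun τ => ω τ x * g (ψ τ x)) t =
        jbr (fun y => lap2 (ψ t) y) (G ∘ ψ t) x - jbr (φ t) (fun x => ω t x * g (ψ t x)) x := by
      intro x
      have dψ := (hψt.differentiable (by simp)) x
      have dω := (hωt.differentiable (by simp)) x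
      have dg : DifferentiableAt ℝ (fun y => g (ψ t y)) x :=
        ((hg.comp hψt).differentiable (by simp)) x
      have hd : HasDerivAt (fun τ => ω τ x * g (ψ τ x))
          (deriv (fun τ => ω τ x) t * g (ψ t x) +
            ω t x * (deriv g (ψ t x) * deriv (fun τ => ψ τ x) t)) t :=
        ((htslice hω x) t).hasDerivAt.mul
          (HasDerivAt.comp t (hgd (ψ t x)) ((htslice hψ x) t).hasDerivAt)
      rw [hd.deriv]
      have E1 := hωeq t x
      have E2 := hψeq t x
      rw [show G ∘ ψ t = fun y => G (ψ t y) from rfl]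
      unfold jbr at E1 E2 ⊢
      rw [mhd_pd2_mul 0 dω dg, mhd_pd2_mul 1 dω dg, mhd_pd2_comp 0 dψ (hGd _),
        mhd_pd2_comp 1 dψ (hGd _), mhd_pd2_comp 0 dψ (hgd _), mhd_pd2_comp 1 dψ (hgd _)]
      linear_combination g (ψ t x) * E1 + ω t x * deriv g (ψ t x) * E2
    have hz : ∫ x, deriv (fun τ => ω τ x * g (ψ τ x)) t = 0 := by
      simp_rw [hpt]
      rw [integral_sub i1 i2, e1, e2, sub_zero]
    rw [← hz]
    exact h
  exact is_const_of_deriv_eq_zero (fun t => (hder t).differentiableAt) fun t => (hder t).deriv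
end

section
/- Let ψ, ψ̌ : ℝ × ℝ² → ℝ and V : ℝ × ℝ² → ℝ² be smooth, with ∇·V = 0 everywhere, ∂ₜψ + V·∇ψ = 0 and ∂ₜψ̌ + V·∇ψ̌ = 0 for all (t,x), and suppose there is a compact set K ⊆ ℝ² such that ψ(t,·) and ψ̌(t,·) vanish outside K for every t. Let h : ℝ → ℝ be continuously differentiable with h(0) = 0. Then t ↦ ∫_{ℝ²} h(ψ(t,x) ψ̌(t,x)) dx is constant in t. -/
open MeasureTheory

lemma aux_int (K : Set (Fin 2 → ℝ)) (hK : IsCompact K) (f : (Fin 2 → ℝ) → ℝ)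
    (hf : Continuous f) (h0 : ∀ x, x ∉ K → f x = 0) : Integrable f :=
  hf.integrable_of_hasCompactSupport (HasCompactSupport.intro hK h0)

lemma aux_slice_x (G : ℝ × (Fin 2 → ℝ) → ℝ) (hG : ContDiff ℝ 1 G) (t : ℝ) (x : Fin 2 → ℝ)
    (v : Fin 2 → ℝ) : fderiv ℝ (fun y => G (t, y)) x v = fderiv ℝ G (t, x) (0, v) := by
  have h1 : HasFDerivAt G (fderiv ℝ G (t, x)) (t, x) :=
    (hG.differentiable one_ne_zero _).hasFDerivAt
  have h2 := h1.comp x (hasFDerivAt_prodMk_right t x)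
  have h3 : fderiv ℝ (fun y => G (t, y)) x = _ := h2.fderiv
  rw [h3]
  simp

lemma aux_slice_t (G : ℝ × (Fin 2 → ℝ) → ℝ) (hG : ContDiff ℝ 1 G) (t : ℝ) (x : Fin 2 → ℝ) :
    HasDerivAt (fun s => G (s, x)) (fderiv ℝ G (t, x) (1, 0)) t := by
  have h1 : HasFDerivAt G (fderiv ℝ G (t, x)) (t, x) :=
    (hG.differentiable one_ne_zero _).hasFDerivAt
  exact h1.comp_hasDerivAt t ((hasDerivAt_id t).prodMk (hasDerivAt_const t x))

lemma aux_zero (K : Set (Fin 2 → ℝ)) (hK : IsCompact K) (G : ℝ × (Fin 2 → ℝ) → ℝ)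
    (h0 : ∀ t x, x ∉ K → G (t, x) = 0) (t : ℝ) (x : Fin 2 → ℝ) (hx : x ∉ K) :
    fderiv ℝ G (t, x) = 0 := by
  have : G =ᶠ[nhds (t, x)] fun _ => 0 := by
    have ho : IsOpen {p : ℝ × (Fin 2 → ℝ) | p.2 ∉ K} :=
      hK.isClosed.isOpen_compl.preimage continuous_snd
    filter_upwards [ho.mem_nhds (show (t, x) ∈ _ from hx)] with p hp
    exact h0 p.1 p.2 hp
  rw [this.fderiv_eq]
  simp

lemma aux_main (K : Set (Fin 2 → ℝ)) (hK : IsCompact K) (G : ℝ × (Fin 2 → ℝ) → ℝ)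
    (hG : ContDiff ℝ 1 G)
    (h0 : ∀ t x, x ∉ K → G (t, x) = 0)
    (V : ℝ → (Fin 2 → ℝ) → (Fin 2 → ℝ))
    (hV : ContDiff ℝ (⊤ : ℕ∞) (fun p : ℝ × (Fin 2 → ℝ) => V p.1 p.2))
    (hdiv : ∀ t x, div2 (V t) x = 0)
    (hadv : ∀ t x, fderiv ℝ G (t, x) (1, 0)
      + ∑ i, V t x i * fderiv ℝ G (t, x) (0, Pi.single i 1) = 0) (t₁ t₂ : ℝ) :
    ∫ x, G (t₁, x) = ∫ x, G (t₂, x) := by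
  have hcf : Continuous (fderiv ℝ G) := hG.continuous_fderiv one_ne_zero
  have hcd : ∀ (t : ℝ) (v : ℝ × (Fin 2 → ℝ)),
      Continuous fun x : Fin 2 → ℝ => fderiv ℝ G (t, x) v := fun t v => by fun_prop
  have hz := aux_zero K hK G h0
  have hVt : ∀ t, ContDiff ℝ 1 (V t) := fun t =>
    (hV.of_le (by exact_mod_cast le_top)).comp (contDiff_prodMk_right t)
  have hVi : ∀ t (i : Fin 2), ContDiff ℝ 1 (fun x => V t x i) := fun t i =>
    contDiff_pi.1 (hVt t) i
  have hGt : ∀ t, ContDiff ℝ 1 (fun x => G (t, x)) := fun t => hG.comp (contDiff_prodMk_right t)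
  have hder0 : ∀ t, ∫ x, fderiv ℝ G (t, x) (1, 0) = 0 := by
    intro t
    have hparts : ∀ i : Fin 2, ∫ x, V t x i * fderiv ℝ G (t, x) (0, Pi.single i 1)
        = - ∫ x, pd2 i (fun y => V t y i) x * G (t, x) := by
      intro i
      have := integral_mul_fderiv_eq_neg_fderiv_mul_of_integrable (μ := volume)
        (f := fun x => V t x i) (g := fun x => G (t, x)) (v := Pi.single i 1)
        (aux_int K hK _ ((((hVi t i).continuous_fderiv one_ne_zero).clm_apply
          continuous_const).mul (hGt t).continuous) (fun x hx => by simp [h0 t x hx]))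
        (aux_int K hK _ ((hVi t i).continuous.mul (((hGt t).continuous_fderiv
          one_ne_zero).clm_apply continuous_const))
          (fun x hx => by rw [aux_slice_x G hG, hz t x hx]; simp))
        (aux_int K hK _ ((hVi t i).continuous.mul (hGt t).continuous)
          (fun x hx => by simp [h0 t x hx]))
        (fun x _ => (hVi t i).differentiable one_ne_zero x)
        (fun x _ => (hGt t).differentiable one_ne_zero x)
      simp only [aux_slice_x G hG] at this
      exact this
    have e : ∀ x, fderiv ℝ G (t, x) (1, 0)
        = - ∑ i, V t x i * fderiv ℝ G (t, x) (0, Pi.single i 1) := fun x => by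
      linarith [hadv t x]
    simp only [e]
    rw [integral_neg, integral_finsetSum]
    · simp only [hparts]
      rw [Finset.sum_neg_distrib, neg_neg, ← integral_finsetSum]
      · simp only [← Finset.sum_mul]
        have : ∀ x, ∑ i, pd2 i (fun y => V t y i) x = 0 := fun x => hdiv t x
        simp [this]
      · intro i _
        exact aux_int K hK _ ((((hVi t i).continuous_fderiv one_ne_zero).clm_apply
          continuous_const).mul (hGt t).continuous) (fun x hx => by simp [h0 t x hx])
    · intro i _
      exact aux_int K hK _ ((hVi t i).continuous.mul (hcd t _))
          (fun x hx => by rw [hz t x hx]; simp)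
  have hder : ∀ t, HasDerivAt (fun s => ∫ x, G (s, x)) 0 t := by
    intro t
    obtain ⟨M, hM⟩ := ((isCompact_Icc (a := t - 1) (b := t + 1)).prod hK).exists_bound_of_continuousOn
      (f := fun p => fderiv ℝ G p (1, 0)) (by fun_prop)
    have := (hasDerivAt_integral_of_dominated_loc_of_deriv_le (μ := volume)
      (F := fun s x => G (s, x)) (F' := fun s x => fderiv ℝ G (s, x) (1, 0)) (x₀ := t)
      (s := Set.Icc (t - 1) (t + 1)) (bound := K.indicator fun _ => M)
      (Icc_mem_nhds (by linarith) (by linarith))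
      (Filter.Eventually.of_forall fun s => (hGt s).continuous.aestronglyMeasurable)
      (aux_int K hK _ (hGt t).continuous (h0 t))
      (hcd t _).aestronglyMeasurable
      (Filter.Eventually.of_forall fun x s hs => by
        by_cases hx : x ∈ K
        · rw [Set.indicator_of_mem hx]
          exact hM (s, x) ⟨hs, hx⟩
        · rw [Set.indicator_of_notMem hx, hz s x hx]; simp)
      ((integrable_indicator_iff hK.measurableSet).2
        (integrableOn_const hK.measure_lt_top.ne))
      (Filter.Eventually.of_forall fun x s _ => aux_slice_t G hG s x)).2
    rwa [hder0 t] at this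
  exact is_const_of_deriv_eq_zero (fun t => (hder t).differentiableAt)
    (fun t => (hder t).deriv) t₁ t₂

/-- For two scalar fields `ψ` and `ψ̌` advected by the same incompressible
flow `V` on ℝ², the Casimir `∫ h(ψψ̌)` is a constant of motion for every C¹ function `h`
with `h 0 = 0`. -/
theorem mock_scalar_casimir_constant
    (ψ ψm : ℝ → (Fin 2 → ℝ) → ℝ)
    (V : ℝ → (Fin 2 → ℝ) → (Fin 2 → ℝ))
    (hψ : ContDiff ℝ (⊤ : ℕ∞) (fun p : ℝ × (Fin 2 → ℝ) => ψ p.1 p.2))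
    (hψm : ContDiff ℝ (⊤ : ℕ∞) (fun p : ℝ × (Fin 2 → ℝ) => ψm p.1 p.2))
    (hV : ContDiff ℝ (⊤ : ℕ∞) (fun p : ℝ × (Fin 2 → ℝ) => V p.1 p.2))
    (hdiv : ∀ t x, div2 (V t) x = 0)
    (hadv : ∀ t x, deriv (fun τ => ψ τ x) t + ∑ i, V t x i * pd2 i (ψ t) x = 0)
    (hadvm : ∀ t x, deriv (fun τ => ψm τ x) t + ∑ i, V t x i * pd2 i (ψm t) x = 0)
    (K : Set (Fin 2 → ℝ)) (hK : IsCompact K)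
    (hψsupp : ∀ t x, x ∉ K → ψ t x = 0)
    (hψmsupp : ∀ t x, x ∉ K → ψm t x = 0)
    (h : ℝ → ℝ) (hh : ContDiff ℝ 1 h) (hh0 : h 0 = 0) :
    ∀ t₁ t₂ : ℝ,
      (∫ x : Fin 2 → ℝ, h (ψ t₁ x * ψm t₁ x)) =
        ∫ x : Fin 2 → ℝ, h (ψ t₂ x * ψm t₂ x) := by
  intro t₁ t₂
  have h1 : ContDiff ℝ 1 (fun p : ℝ × (Fin 2 → ℝ) => ψ p.1 p.2) :=
    hψ.of_le (by exact_mod_cast le_top)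
  have h2 : ContDiff ℝ 1 (fun p : ℝ × (Fin 2 → ℝ) => ψm p.1 p.2) :=
    hψm.of_le (by exact_mod_cast le_top)
  have hG : ContDiff ℝ 1 (fun p : ℝ × (Fin 2 → ℝ) => h (ψ p.1 p.2 * ψm p.1 p.2)) :=
    hh.comp (h1.mul h2)
  refine aux_main K hK (fun p => h (ψ p.1 p.2 * ψm p.1 p.2)) hG
    (fun t x hx => by simp [hψsupp t x hx, hh0]) V hV hdiv ?_ t₁ t₂
  intro t x
  have d1 := (h1.differentiable one_ne_zero (t, x)).hasFDerivAt
  have d2 := (h2.differentiable one_ne_zero (t, x)).hasFDerivAt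
  have dh := (hh.differentiable one_ne_zero (ψ t x * ψm t x)).hasDerivAt
  have d := dh.comp_hasFDerivAt (t, x) (d1.mul d2)
  have e : fderiv ℝ (fun p : ℝ × (Fin 2 → ℝ) => h (ψ p.1 p.2 * ψm p.1 p.2)) (t, x) = _ := d.fderiv
  have a := hadv t x
  have b := hadvm t x
  rw [(aux_slice_t _ h1 t x).deriv] at a
  rw [(aux_slice_t _ h2 t x).deriv] at b
  have sx1 : ∀ i, pd2 i (ψ t) x = _ := fun i => aux_slice_x _ h1 t x (Pi.single i 1)
  have sx2 : ∀ i, pd2 i (ψm t) x = _ := fun i => aux_slice_x _ h2 t x (Pi.single i 1)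
  simp only [sx1, Fin.sum_univ_two] at a
  simp only [sx2, Fin.sum_univ_two] at b
  rw [e]
  simp only [Fin.sum_univ_two, ContinuousLinearMap.smul_apply, ContinuousLinearMap.add_apply,
    smul_eq_mul]
  linear_combination (deriv h (ψ t x * ψm t x)) * (ψ t x * b + ψm t x * a)
end

section
/- Let B_y, B_z, θ : ℝ → ℝ be smooth, and let k_y, k_z ∈ ℝ. Define the ℂ³-valued fields on ℝ³: Ǎ(x,y,z) = i θ(x) e^{i(k_y y + k_z z)} (0, k_y, k_z) and B*(x,y,z) = (0, B_y(x), B_z(x)). Then the (componentwise complexified) identity B* × (∇×Ǎ) = i θ′(x) (k_y B_y(x) + k_z B_z(x)) e^{i(k_y y + k_z z)} (1, 0, 0) holds at every point; consequently B* × (∇×Ǎ) vanishes identically on ℝ³ if and only if θ′(x) (k_y B_y(x) + k_z B_z(x)) = 0 for every x ∈ ℝ. -/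
open Complex

/-- `i`-th spatial partial derivative of a ℂ-valued field on ℝ³. -/
noncomputable def pdC (i : Fin 3) (f : (Fin 3 → ℝ) → ℂ) (x : Fin 3 → ℝ) : ℂ :=
  fderiv ℝ f x (Pi.single i 1)

/-- Componentwise curl of a ℂ³-valued field on ℝ³. -/
noncomputable def curlC (F : (Fin 3 → ℝ) → (Fin 3 → ℂ)) (x : Fin 3 → ℝ) : Fin 3 → ℂ :=
  ![pdC 1 (fun y => F y 2) x - pdC 2 (fun y => F y 1) x,
    pdC 2 (fun y => F y 0) x - pdC 0 (fun y => F y 2) x,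
    pdC 0 (fun y => F y 1) x - pdC 1 (fun y => F y 0) x]

/-- Cross product extended bilinearly to ℂ³. -/
def crossC (a b : Fin 3 → ℂ) : Fin 3 → ℂ :=
  ![a 1 * b 2 - a 2 * b 1, a 2 * b 0 - a 0 * b 2, a 0 * b 1 - a 1 * b 0]

theorem slab_aux (θ : ℝ → ℝ) (hθ : Differentiable ℝ θ) (ky kz : ℝ) (c : ℂ) (x v : Fin 3 → ℝ) :
    fderiv ℝ (fun x : Fin 3 → ℝ => (Complex.I * (θ (x 0) : ℂ) *
      Complex.exp (Complex.I * ((ky : ℂ) * (x 1 : ℂ) + (kz : ℂ) * (x 2 : ℂ)))) * c) x v =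
    (Complex.I * ((deriv θ (x 0) : ℝ) : ℂ) * (v 0 : ℂ) +
      Complex.I * (θ (x 0) : ℂ) * (Complex.I * ((ky : ℂ) * (v 1 : ℂ) + (kz : ℂ) * (v 2 : ℂ)))) *
      Complex.exp (Complex.I * ((ky : ℂ) * (x 1 : ℂ) + (kz : ℂ) * (x 2 : ℂ))) * c := by
  have hp : ∀ i : Fin 3, HasFDerivAt (fun x : Fin 3 → ℝ => x i)
      (ContinuousLinearMap.proj (R := ℝ) (φ := fun _ : Fin 3 => ℝ) i) x :=
    fun i => hasFDerivAt_apply i x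
  have hc : ∀ i : Fin 3, HasFDerivAt (fun x : Fin 3 → ℝ => (x i : ℂ))
      (Complex.ofRealCLM.comp (ContinuousLinearMap.proj (R := ℝ) (φ := fun _ : Fin 3 => ℝ) i)) x :=
    fun i => Complex.ofRealCLM.hasFDerivAt.comp x (hp i)
  have ht : HasFDerivAt (fun x : Fin 3 → ℝ => (θ (x 0) : ℂ)) _ x :=
    Complex.ofRealCLM.hasFDerivAt.comp x
      ((hθ (x 0)).hasDerivAt.comp_hasFDerivAt x (hp 0))
  have he := ((((hc 1).const_mul (ky : ℂ)).add ((hc 2).const_mul (kz : ℂ))).const_mul Complex.I).cexp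
  have h := ((ht.const_mul Complex.I).mul he).mul_const c
  have h2 := congrArg (fun L => L v) h.fderiv
  refine Eq.trans h2 ?_
  simp
  ring

/-- For the slab field `B* = (0, B_y(x), B_z(x))` and the helical ansatz
`Ac = iθ(x) e^{i(k_y y + k_z z)} (0, k_y, k_z)`, one has
`B* × (∇×Ac) = iθ′(x) (k_y B_y(x) + k_z B_z(x)) e^{i(k_y y + k_z z)} (1,0,0)`;
consequently `B* × (∇×Ac) ≡ 0` iff `θ′(x)(k_y B_y(x) + k_z B_z(x)) = 0` for all `x`. -/
theorem slab_singular_casimir_determining_eq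
    (By Bz θ : ℝ → ℝ)
    (hBy : ContDiff ℝ (⊤ : ℕ∞) By) (hBz : ContDiff ℝ (⊤ : ℕ∞) Bz) (hθ : ContDiff ℝ (⊤ : ℕ∞) θ)
    (ky kz : ℝ)
    (Ac : (Fin 3 → ℝ) → (Fin 3 → ℂ))
    (hAc : Ac = fun x => (Complex.I * (θ (x 0) : ℂ) *
      Complex.exp (Complex.I * ((ky : ℂ) * (x 1 : ℂ) + (kz : ℂ) * (x 2 : ℂ)))) •
        ![(0 : ℂ), (ky : ℂ), (kz : ℂ)])
    (Bs : (Fin 3 → ℝ) → (Fin 3 → ℂ))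
    (hBs : Bs = fun x => ![(0 : ℂ), (By (x 0) : ℂ), (Bz (x 0) : ℂ)]) :
    (∀ x : Fin 3 → ℝ,
      crossC (Bs x) (curlC Ac x) =
        (Complex.I * ((deriv θ (x 0) : ℝ) : ℂ) *
            ((ky * By (x 0) + kz * Bz (x 0) : ℝ) : ℂ) *
            Complex.exp (Complex.I * ((ky : ℂ) * (x 1 : ℂ) + (kz : ℂ) * (x 2 : ℂ)))) •
          ![(1 : ℂ), 0, 0]) ∧
    ((∀ x : Fin 3 → ℝ, crossC (Bs x) (curlC Ac x) = 0) ↔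
      ∀ s : ℝ, deriv θ s * (ky * By s + kz * Bz s) = 0) := by
  have hd : Differentiable ℝ θ := hθ.differentiable (by simp)
  have key : ∀ x : Fin 3 → ℝ,
      crossC (Bs x) (curlC Ac x) =
        (Complex.I * ((deriv θ (x 0) : ℝ) : ℂ) *
            ((ky * By (x 0) + kz * Bz (x 0) : ℝ) : ℂ) *
            Complex.exp (Complex.I * ((ky : ℂ) * (x 1 : ℂ) + (kz : ℂ) * (x 2 : ℂ)))) •
          ![(1 : ℂ), 0, 0] := by
    intro x
    have h0 : ∀ i, pdC i (fun y => Ac y 0) x = _ := fun i => by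
      simp only [hAc, pdC, Pi.smul_apply, smul_eq_mul]
      exact slab_aux θ hd ky kz _ x _
    have h1 : ∀ i, pdC i (fun y => Ac y 1) x = _ := fun i => by
      simp only [hAc, pdC, Pi.smul_apply, smul_eq_mul]
      exact slab_aux θ hd ky kz _ x _
    have h2 : ∀ i, pdC i (fun y => Ac y 2) x = _ := fun i => by
      simp only [hAc, pdC, Pi.smul_apply, smul_eq_mul]
      exact slab_aux θ hd ky kz _ x _
    simp only [curlC, h0, h1, h2, hBs, crossC]
    ext j
    fin_cases j
    · simp
      ring
    · simp
      right
      ring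
    · simp
      right
      ring
  refine ⟨key, ?_, ?_⟩
  · intro h s
    have h1 := congrFun ((key (fun _ => s)).symm.trans (h _)) 0
    simp only [Pi.smul_apply, smul_eq_mul, Matrix.cons_val_zero, mul_one, Pi.zero_apply] at h1
    have h2 := (mul_eq_zero.mp h1).resolve_right (Complex.exp_ne_zero _)
    rw [mul_assoc] at h2
    have h3 := (mul_eq_zero.mp h2).resolve_left Complex.I_ne_zero
    exact_mod_cast h3
  · intro h x
    rw [key x, mul_assoc Complex.I, ← Complex.ofReal_mul, h (x 0)]
    simp
end
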